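/- arXiv:1502.05127 — 3 statements merged into one kernel-verified Lean document; each statement's English description precedes it below -/
import Mathlib

section
/- Let f be analytic and injective on 𝔻 with f(0) = 0, and suppose that the disk {w ∈ ℂ : |w| < ρ} is contained in f(𝔻) for some ρ > 0. Then for every r with 0 < r < 1, the disk {w ∈ ℂ : |w| < ρr} is contained in f({z : |z| < r}). Consequently, for every a ∈ 𝔻 \ {0}, the disk {w : |w| < ρ} is contained in the image of 𝔻 under the map z ↦ f(az)/a. -/
/-- The unit disk `{z : ℂ | |z| < 1}`. -/
noncomputable def unitDisk : Set ℂ := Metric.ball 0 1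

/-- The extremal convex function of order `α`:
`k_α(z) = ((1-z)^(2α-1) - 1)/(1-2α)` (so that `k_α(0)=0`, `k_α'(0)=1`),
with `k_{1/2}(z) = -log(1-z)` (principal branches). -/
noncomputable def kfun (α : ℝ) (z : ℂ) : ℂ :=
  if α = 1 / 2 then -Complex.log (1 - z)
  else ((1 - z) ^ ((2 * α - 1 : ℝ) : ℂ) - 1) / ((1 - 2 * α : ℝ) : ℂ)

/-- `h_α(z) = k_α(z)/z` for `z ≠ 0`, `h_α(0) = 1`. -/
noncomputable def hfun (α : ℝ) (z : ℂ) : ℂ :=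
  if z = 0 then 1 else kfun α z / z

/-- `f ∈ K(α)`: `f` is analytic on the unit disk, normalized by `f(0)=0`, `f'(0)=1`,
with nonvanishing derivative and `Re(1 + z f''(z)/f'(z)) > α` on the disk. -/
def IsConvexOfOrder (α : ℝ) (f : ℂ → ℂ) : Prop :=
  DifferentiableOn ℂ f unitDisk ∧ f 0 = 0 ∧ deriv f 0 = 1 ∧
    ∀ z ∈ unitDisk, deriv f z ≠ 0 ∧
      α < (1 + z * deriv (deriv f) z / deriv f z).re

open Filter Topology Metric Set

section HolomorphicInverse

variable {U : Set ℂ} {f g : ℂ → ℂ} {z : ℂ}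

theorem Set.InjOn.not_eventually_const (hU : IsOpen U) (hinj : InjOn f U) (hz : z ∈ U) :
    ¬ ∀ᶠ y in 𝓝 z, f y = f z := by
  intro h
  have hne : ∀ᶠ y in 𝓝[≠] z, False := by
    filter_upwards [nhdsWithin_le_nhds h, nhdsWithin_le_nhds (hU.mem_nhds hz),
      self_mem_nhdsWithin] with y hy hyU hyz
    exact hyz (hinj hyU hz hy)
  exact (NeBot.ne inferInstance) (eventually_false_iff_eq_bot.1 hne)

/-- An injective holomorphic function on an open set is open at every point. -/
theorem Set.InjOn.nhds_le_map_nhds (hU : IsOpen U) (hf : DifferentiableOn ℂ f U)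
    (hinj : InjOn f U) (hz : z ∈ U) : 𝓝 (f z) ≤ map f (𝓝 z) :=
  (hf.analyticAt (hU.mem_nhds hz)).eventually_constant_or_nhds_le_map_nhds.resolve_left
    (hinj.not_eventually_const hU hz)

/-- The critical points of an injective holomorphic function are isolated. -/
theorem Set.InjOn.eventually_deriv_ne_zero (hU : IsOpen U) (hf : DifferentiableOn ℂ f U)
    (hinj : InjOn f U) (hz : z ∈ U) : ∀ᶠ y in 𝓝[≠] z, deriv f y ≠ 0 := by
  have hderiv : AnalyticAt ℂ (deriv f) z := (hf.analyticAt (hU.mem_nhds hz)).deriv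
  refine hderiv.eventually_eq_zero_or_eventually_ne_zero.resolve_left
    fun h => hinj.not_eventually_const hU hz ?_
  obtain ⟨ε, hε, hball⟩ := Metric.eventually_nhds_iff_ball.1 (h.and (hU.mem_nhds hz))
  filter_upwards [ball_mem_nhds z hε] with y hy
  exact isOpen_ball.is_const_of_deriv_eq_zero (convex_ball z ε).isPreconnected
    (hf.mono fun x hx => (hball x hx).2) (fun x hx => (hball x hx).1) hy (mem_ball_self hε)

/-- A left inverse of an injective holomorphic function is holomorphic on the image. -/
theorem Set.LeftInvOn.differentiableAt_of_holomorphic (hU : IsOpen U)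
    (hf : DifferentiableOn ℂ f U) (hg : LeftInvOn g f U) (hz : z ∈ U) :
    DifferentiableAt ℂ g (f z) := by
  have hinj : InjOn f U := hg.injOn
  have hcont : ∀ y ∈ U, ContinuousAt g (f y) := by
    intro y hy
    rw [ContinuousAt, hg hy]
    refine Tendsto.mono_left ?_ (hinj.nhds_le_map_nhds hU hf hy)
    refine tendsto_map'_iff.2 (tendsto_id.congr' ?_)
    filter_upwards [hU.mem_nhds hy] with x hx using (hg hx).symm
  have hright : ∀ y ∈ U, ∀ᶠ w in 𝓝 (f y), g w ∈ U ∧ f (g w) = w := by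
    intro y hy
    refine hinj.nhds_le_map_nhds hU hf hy (mem_map.2 ?_)
    filter_upwards [hU.mem_nhds hy] with x hx
    simp [hg hx, hx]
  refine (Complex.analyticAt_of_differentiable_on_punctured_nhds_of_continuousAt ?_
    (hcont z hz)).differentiableAt
  have hlim : Tendsto g (𝓝[≠] (f z)) (𝓝[≠] z) := by
    refine tendsto_nhdsWithin_iff.2 ⟨?_, ?_⟩
    · simpa only [hg hz] using (hcont z hz).tendsto.mono_left nhdsWithin_le_nhds
    · filter_upwards [nhdsWithin_le_nhds (hright z hz), self_mem_nhdsWithin] with w hw hne hwz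
      exact hne (by rw [mem_singleton_iff] at hwz ⊢; rw [← hw.2, hwz])
  filter_upwards [hlim.eventually (hinj.eventually_deriv_ne_zero hU hf hz),
    nhdsWithin_le_nhds (hright z hz)] with w hderiv hw
  have hwc := hcont (g w) hw.1
  have hwr := hright (g w) hw.1
  rw [hw.2] at hwc hwr
  exact (HasDerivAt.of_local_left_inverse hwc
    (hf.differentiableAt (hU.mem_nhds hw.1)).hasDerivAt hderiv
    (hwr.mono fun _ h => h.2)).differentiableAt

end HolomorphicInverse

/-- if `f` is analytic and injective on `𝔻`, `f(0)=0` and `f(𝔻) ⊇ {|w|<ρ}`,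
then `f({|z|<r}) ⊇ {|w|<ρr}` for `0<r<1`, and consequently `{|w|<ρ}` is contained in the
image of `𝔻` under `z ↦ f(az)/a` for every `a ∈ 𝔻 \ {0}`. -/
theorem covering_lemma (f : ℂ → ℂ) (hf : DifferentiableOn ℂ f unitDisk)
    (hinj : Set.InjOn f unitDisk) (hf0 : f 0 = 0)
    (ρ : ℝ) (hρ : 0 < ρ) (hcov : Metric.ball (0 : ℂ) ρ ⊆ f '' unitDisk) :
    (∀ r : ℝ, 0 < r → r < 1 →
      Metric.ball (0 : ℂ) (ρ * r) ⊆ f '' Metric.ball (0 : ℂ) r) ∧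
    ∀ a ∈ unitDisk, a ≠ 0 →
      Metric.ball (0 : ℂ) ρ ⊆ (fun z => f (a * z) / a) '' unitDisk := by
  have hdisk : IsOpen unitDisk := isOpen_ball
  have h0 : (0 : ℂ) ∈ unitDisk := mem_ball_self one_pos
  have hsub : ∀ r : ℝ, 0 < r → r < 1 → ball (0 : ℂ) (ρ * r) ⊆ f '' ball (0 : ℂ) r := by
    intro r hr hr1 w hw
    set g := Function.invFunOn f unitDisk
    have hg : LeftInvOn g f unitDisk := hinj.leftInvOn_invFunOn
    have hg0 : g 0 = 0 := by simpa only [hf0] using hg h0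
    have hgd : DifferentiableOn ℂ g (ball 0 ρ) := by
      intro y hy
      obtain ⟨x, hx, rfl⟩ := hcov hy
      exact (hg.differentiableAt_of_holomorphic hdisk hf hx).differentiableWithinAt
    have hmaps : MapsTo g (ball 0 ρ) (closedBall (g 0) 1) := by
      intro y hy
      obtain ⟨x, hx, rfl⟩ := hcov hy
      rw [hg hx, hg0]
      exact ball_subset_closedBall hx
    have hwρ : w ∈ ball (0 : ℂ) ρ := ball_subset_ball (by nlinarith) hw
    have hle := Complex.dist_le_div_mul_dist_of_mapsTo_ball hgd hmaps hwρ
    obtain ⟨z, hz, rfl⟩ := hcov hwρ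
    refine ⟨z, ?_, rfl⟩
    rw [hg hz, hg0, one_div_mul_eq_div] at hle
    exact hle.trans_lt ((div_lt_iff₀' hρ).2 hw)
  refine ⟨hsub, fun a ha ha0 w hw => ?_⟩
  have hapos : 0 < ‖a‖ := norm_pos_iff.2 ha0
  have haw : a * w ∈ ball (0 : ℂ) (ρ * ‖a‖) := by
    rw [mem_ball_zero_iff] at hw ⊢
    rw [norm_mul, mul_comm]
    gcongr
  obtain ⟨u, hu, huw⟩ := hsub ‖a‖ hapos (mem_ball_zero_iff.1 ha) haw
  refine ⟨u / a, ?_, ?_⟩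
  · rw [unitDisk, mem_ball_zero_iff, norm_div, div_lt_one hapos]
    exact mem_ball_zero_iff.1 hu
  · simp only [mul_div_cancel₀ _ ha0, huw]
    exact mul_div_cancel_left₀ w ha0
end

section
/- Let ρ > 0 and let f, g ∈ K(0) (normalized convex univalent functions on 𝔻). Suppose that (1) both f(𝔻) and g(𝔻) contain the disk {w : |w| < ρ}, and (2) |Im(f(z)/z)| < ρ and |Im(g(z)/z)| < ρ for all z ∈ 𝔻 \ {0}. Then h = (f+g)/2 is injective on 𝔻 and h(𝔻) is starlike with respect to 0; that is, (f+g)/2 ∈ S*. -/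
open Complex Metric Set Filter Topology ComplexConjugate

/-- A nonvanishing holomorphic function on a disk is a constant times the exponential of a
primitive of its logarithmic derivative. -/
lemma exists_exp_primitive_logDeriv {k : ℂ → ℂ} {c : ℂ} {r : ℝ}
    (hk : DifferentiableOn ℂ k (ball c r)) (hk0 : ∀ z ∈ ball c r, k z ≠ 0) :
    ∃ L : ℂ → ℂ, (∀ z ∈ ball c r, HasDerivAt L (deriv k z / k z) z) ∧
      ∀ z ∈ ball c r, ∀ w ∈ ball c r, k z = k w * exp (L z - L w) := by
  obtain ⟨L, hL⟩ := ((hk.deriv isOpen_ball).div hk hk0).isExactOn_ball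
  refine ⟨L, hL, fun z hz w hw => ?_⟩
  have hder : ∀ x ∈ ball c r, HasDerivAt (fun x => k x * exp (-L x)) 0 x := fun x hx => by
    have h1 := ((hk.differentiableAt (isOpen_ball.mem_nhds hx)).hasDerivAt).mul (hL x hx).neg.cexp
    convert! h1 using 1
    have := hk0 x hx
    rw [Pi.div_apply]
    field_simp
    ring
  have hconst : k z * exp (-L z) = k w * exp (-L w) :=
    isOpen_ball.is_const_of_deriv_eq_zero (convex_ball c r).isPreconnected
      (fun x hx => (hder x hx).differentiableAt.differentiableWithinAt)
      (fun x hx => (hder x hx).deriv) hz hw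
  calc k z = k z * exp (-L z) * exp (L z) := by rw [mul_assoc, ← exp_add]; simp
    _ = k w * exp (L z - L w) := by rw [hconst, mul_assoc, ← exp_add]; ring_nf

/-- **Noshiro–Warschawski theorem**. -/
lemma injOn_of_convex_of_re_deriv_pos {ψ ψ' : ℂ → ℂ} {U : Set ℂ} (hU : Convex ℝ U)
    (hψ : ∀ z ∈ U, HasDerivAt ψ (ψ' z) z) (hre : ∀ z ∈ U, 0 < (ψ' z).re) : InjOn ψ U := by
  intro a ha b hb hab
  by_contra hne
  have hmem : ∀ t ∈ Icc (0 : ℝ) 1, a + t * (b - a) ∈ U := fun t ht => by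
    simpa using hU.add_smul_sub_mem ha hb ht
  have hder : ∀ t ∈ Icc (0 : ℝ) 1,
      HasDerivAt (fun t : ℝ => (conj (b - a) * ψ (a + t * (b - a))).re)
        (normSq (b - a) * (ψ' (a + t * (b - a))).re) t := fun t ht => by
    have h1 : HasDerivAt (fun s : ℂ => a + s * (b - a)) (b - a) (t : ℂ) := by
      simpa using ((hasDerivAt_id (t : ℂ)).mul_const (b - a)).const_add a
    have h2 := (((hψ _ (hmem t ht)).comp (t : ℂ) h1).const_mul (conj (b - a))).real_of_complex
    convert! h2 using 1
    rw [show conj (b - a) * (ψ' (a + t * (b - a)) * (b - a))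
      = (normSq (b - a) : ℂ) * ψ' (a + t * (b - a)) by rw [normSq_eq_conj_mul_self]; ring,
      re_ofReal_mul]
  have hmono : StrictMonoOn (fun t : ℝ => (conj (b - a) * ψ (a + t * (b - a))).re) (Icc 0 1) := by
    refine strictMonoOn_of_deriv_pos (convex_Icc 0 1)
      (fun t ht => (hder t ht).continuousAt.continuousWithinAt) fun t ht => ?_
    have ht' := interior_subset ht
    rw [(hder t ht').deriv]
    exact mul_pos (normSq_pos.2 (sub_ne_zero.2 (Ne.symm hne))) (hre _ (hmem t ht'))
  have := hmono (left_mem_Icc.2 zero_le_one) (right_mem_Icc.2 zero_le_one) zero_lt_one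
  simp [hab] at this

lemma differentiableOn_invFunOn {f : ℂ → ℂ} {U : Set ℂ} (hU : IsOpen U)
    (hf : DifferentiableOn ℂ f U) (hf' : ∀ z ∈ U, deriv f z ≠ 0) (hinj : InjOn f U) :
    DifferentiableOn ℂ (Function.invFunOn f U) (f '' U) := by
  rintro _ ⟨z, hz, rfl⟩
  have hs : HasStrictDerivAt f (deriv f z) z :=
    (hf.analyticAt (hU.mem_nhds hz)).hasStrictDerivAt
  have hmap : map f (𝓝 z) = 𝓝 (f z) := hs.map_nhds_eq (hf' z hz)
  have hleft : ∀ x ∈ U, Function.invFunOn f U (f x) = x := fun x hx =>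
    hinj.leftInvOn_invFunOn hx
  have hcont : ContinuousAt (Function.invFunOn f U) (f z) := by
    rw [ContinuousAt, ← hmap, hleft z hz, tendsto_map'_iff]
    refine tendsto_id.congr' ?_
    filter_upwards [hU.mem_nhds hz] with x hx using (hleft x hx).symm
  refine (HasDerivAt.of_local_left_inverse hcont (f := f) (f' := deriv f z) ?_ (hf' z hz) ?_)
    |>.differentiableAt.differentiableWithinAt
  · rw [hleft z hz]; exact hs.hasDerivAt
  · rw [← hmap, eventually_map]
    filter_upwards [hU.mem_nhds hz] with x hx
    rw [hleft x hx]

/-- The image of a circle centred at `0` under a convex function lies strictly on one side of its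
tangent line at any other point. -/
lemma IsConvexOfOrder.re_sub_mul_conj_pos_of_circle {f : ℂ → ℂ} (hf : IsConvexOfOrder 0 f) {z : ℂ}
    (hz : z ∈ ball (0 : ℂ) 1) (hz0 : z ≠ 0) {t : ℝ} (ht : t ∈ Ioo 0 (2 * Real.pi)) :
    0 < ((f z - f (z * exp (t * I))) * conj (z * deriv f z)).re := by
  obtain ⟨hd, -, -, hcv⟩ := hf
  unfold unitDisk at hd hcv
  obtain ⟨L, hL, hLexp⟩ := exists_exp_primitive_logDeriv (hd.deriv isOpen_ball)
    (fun z hz => (hcv z hz).1)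
  set c := z * deriv f z with hc
  have hc0 : 0 < normSq c := normSq_pos.2 (mul_ne_zero hz0 (hcv z hz).1)
  have hmem : ∀ s : ℝ, z * exp (s * I) ∈ ball (0 : ℂ) 1 := fun s => by
    simpa [norm_exp_ofReal_mul_I] using hz
  have hrot : ∀ s : ℂ, HasDerivAt (fun s : ℂ => z * exp (s * I)) (z * exp (s * I) * I) s :=
      fun s => by
    simpa [mul_assoc] using (((hasDerivAt_id s).mul_const I).cexp.const_mul z)
  set W : ℂ → ℂ := fun s => s * I + (L (z * exp (s * I)) - L z) with hW
  set A : ℝ → ℝ := fun s => (-I * W s).re with hA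
  set V : ℝ → ℝ := fun s => ((f z - f (z * exp (s * I))) * conj c).re with hV
  have hAim : ∀ s, A s = (W s).im := fun s => by simp [hA]
  have hAder : ∀ s : ℝ, ∃ a, 0 < a ∧ HasDerivAt A a s := fun s => by
    have h1 := ((hasDerivAt_id (s : ℂ)).mul_const I).add
      (((hL _ (hmem s)).comp (s : ℂ) (hrot s)).sub_const (L z))
    refine ⟨_, ?_, (h1.const_mul (-I)).real_of_complex⟩
    convert! (hcv _ (hmem s)).2 using 2
    linear_combination (-1 - deriv (deriv f) (z * exp (s * I)) / deriv f (z * exp (s * I)) *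
      (z * exp (s * I))) * I_sq
  have hVder : ∀ s : ℝ, HasDerivAt V (normSq c * (Real.exp (W s).re * Real.sin (A s))) s :=
      fun s => by
    have h1 := (((((hd.differentiableAt (isOpen_ball.mem_nhds (hmem s))).hasDerivAt.comp (s : ℂ)
      (hrot s)).const_sub (f z)).mul_const (conj c))).real_of_complex
    convert! h1 using 1
    have h2 : -(deriv f (z * exp (s * I)) * (z * exp (s * I) * I)) * conj c
        = (normSq c : ℂ) * (-I * exp (W s)) := by
      rw [hLexp _ (hmem s) z hz, normSq_eq_conj_mul_self, hW, exp_add, hc]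
      ring
    rw [h2, re_ofReal_mul, hAim, ← exp_im]
    simp
  have hAmono : StrictMono A := strictMono_of_deriv_pos fun s => by
    obtain ⟨a, ha, h⟩ := hAder s
    rwa [h.deriv]
  have hA0 : A 0 = 0 := by simp [hA, hW]
  have hA2 : A (2 * Real.pi) = 2 * Real.pi := by simp [hA, hW, exp_two_pi_mul_I]
  have hV0 : V 0 = 0 := by simp [hV]
  have hV2 : V (2 * Real.pi) = 0 := by simp [hV, exp_two_pi_mul_I]
  have hVc : Continuous V := continuous_iff_continuousAt.2 fun s => (hVder s).continuousAt
  change 0 < V t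
  rcases le_total (A t) Real.pi with hle | hle
  · rw [← hV0]
    refine strictMonoOn_of_deriv_pos (convex_Icc 0 t) hVc.continuousOn (fun s hs => ?_)
      (left_mem_Icc.2 ht.1.le) (right_mem_Icc.2 ht.1.le) ht.1
    rw [interior_Icc] at hs
    rw [(hVder s).deriv]
    have : 0 < Real.sin (A s) := Real.sin_pos_of_pos_of_lt_pi
      (hA0 ▸ hAmono hs.1) ((hAmono hs.2).trans_le hle)
    positivity
  · rw [← hV2]
    refine strictAntiOn_of_deriv_neg (convex_Icc t (2 * Real.pi)) hVc.continuousOn (fun s hs => ?_)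
      (left_mem_Icc.2 ht.2.le) (right_mem_Icc.2 ht.2.le) ht.2
    rw [interior_Icc] at hs
    rw [(hVder s).deriv]
    have : Real.sin (A s) < 0 := by
      rw [← Real.sin_sub_two_pi]
      have h1 := hAmono hs.1
      have h2 := hAmono hs.2
      exact Real.sin_neg_of_neg_of_neg_pi_lt (by linarith) (by linarith)
    exact mul_neg_of_pos_of_neg hc0 (mul_neg_of_pos_of_neg (Real.exp_pos _) this)

/-- The tangent line at `f z` to the image of the circle through `z` is a supporting line of the
image of the closed disk. -/
lemma IsConvexOfOrder.re_sub_mul_conj_pos {f : ℂ → ℂ} (hf : IsConvexOfOrder 0 f) {z ζ : ℂ}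
    (hz : z ∈ ball (0 : ℂ) 1) (hζ : ‖ζ‖ ≤ ‖z‖) (hne : ζ ≠ z) :
    0 < ((f z - f ζ) * conj (z * deriv f z)).re := by
  have hz0 : z ≠ 0 := by
    rintro rfl
    simp_all
  have hcircle : ∀ w : ℂ, ‖w‖ = ‖z‖ → w ≠ z → 0 < ((f z - f w) * conj (z * deriv f z)).re := by
    intro w hw hwz
    have hn : ‖w / z‖ = 1 := by rw [norm_div, hw, div_self (norm_ne_zero_iff.2 hz0)]
    have hw' : w = z * exp (toIocMod Real.two_pi_pos 0 (arg (w / z)) * I) := by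
      have h1 := norm_mul_exp_arg_mul_I (w / z)
      rw [hn, ofReal_one, one_mul] at h1
      have h2 : exp (toIocMod Real.two_pi_pos 0 (arg (w / z)) * I) = exp (arg (w / z) * I) := by
        rw [exp_eq_exp_iff_exists_int]
        refine ⟨-toIocDiv Real.two_pi_pos 0 (arg (w / z)), ?_⟩
        rw [toIocMod]
        push_cast
        simp
        ring
      rw [h2, h1]
      field_simp
    have hmem := toIocMod_mem_Ioc Real.two_pi_pos 0 (arg (w / z))
    rw [zero_add] at hmem
    rw [hw'] at hwz ⊢
    refine hf.re_sub_mul_conj_pos_of_circle hz hz0 ⟨hmem.1, lt_of_le_of_ne hmem.2 fun h => hwz ?_⟩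
    rw [h]
    push_cast
    rw [exp_two_pi_mul_I, mul_one]
  rcases hζ.eq_or_lt with h | h
  · exact hcircle ζ h hne
  obtain ⟨hd, -, -, hcv⟩ := hf
  unfold unitDisk at hd hcv
  set c := z * deriv f z with hc
  set E : ℂ → ℂ := fun w => exp (f w * conj c) with hE
  have hz1 : ‖z‖ < 1 := by simpa using hz
  have hsub : closedBall (0 : ℂ) ‖z‖ ⊆ ball 0 1 := closedBall_subset_ball hz1
  have hEd : DifferentiableOn ℂ E (ball 0 1) := (hd.mul_const (conj c)).cexp
  have hEle : ∀ w ∈ closedBall (0 : ℂ) ‖z‖, ‖E w‖ ≤ ‖E z‖ := by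
    intro w hw
    have hr : ‖z‖ ≠ 0 := norm_ne_zero_iff.2 hz0
    refine norm_le_of_forall_mem_frontier_norm_le isBounded_ball (U := ball 0 ‖z‖)
      (DifferentiableOn.diffContOnCl (hEd.mono (by rwa [closure_ball _ hr]))) (fun v hv => ?_)
      (by rwa [closure_ball _ hr])
    rw [frontier_ball _ hr, mem_sphere_zero_iff_norm] at hv
    by_cases hvz : v = z
    · rw [hvz]
    have := hcircle v hv hvz
    simp only [hE, norm_exp]
    rw [sub_mul, sub_re] at this
    exact Real.exp_le_exp.2 (by linarith)
  rw [sub_mul, sub_re, sub_pos]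
  by_contra hcon
  have hζb : ζ ∈ ball (0 : ℂ) ‖z‖ := by simpa using h
  have hmax : IsMaxOn (norm ∘ E) (ball 0 ‖z‖) ζ := fun w hw => by
    refine (hEle w (ball_subset_closedBall hw)).trans ?_
    simp only [hE, norm_exp]
    simp only [Function.comp, norm_exp]
    exact Real.exp_le_exp.2 (not_lt.1 hcon)
  have heq := eqOn_of_isPreconnected_of_isMaxOn_norm (convex_ball (0 : ℂ) ‖z‖).isPreconnected
    isOpen_ball (hEd.mono (ball_subset_closedBall.trans hsub)) hζb hmax
  have hζ1 : ζ ∈ ball (0 : ℂ) 1 := hsub (ball_subset_closedBall hζb)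
  have h1 : HasDerivAt E (exp (f ζ * conj c) * (deriv f ζ * conj c)) ζ :=
    ((hd.differentiableAt (isOpen_ball.mem_nhds hζ1)).hasDerivAt.mul_const (conj c)).cexp
  have h2 : HasDerivAt E 0 ζ := (hasDerivAt_const ζ (E ζ)).congr_of_eventuallyEq
    (heq.eventuallyEq_of_mem (isOpen_ball.mem_nhds hζb))
  have h3 := h1.unique h2
  simp [exp_ne_zero, (hcv ζ hζ1).1, hc, hz0, (hcv z hz).1] at h3

lemma IsConvexOfOrder.injOn {f : ℂ → ℂ} (hf : IsConvexOfOrder 0 f) : InjOn f (ball 0 1) := by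
  intro a ha b hb hab
  by_contra hne
  rcases le_total ‖a‖ ‖b‖ with h | h
  · simpa [hab] using hf.re_sub_mul_conj_pos hb h hne
  · simpa [hab] using hf.re_sub_mul_conj_pos ha h (Ne.symm hne)

/-- By the Schwarz lemma the image of the disk of radius `‖z‖` contains the disk of radius `‖z‖ * ρ`,
so the tangent line at `f z` keeps at least that distance from `0`. -/
lemma IsConvexOfOrder.mul_norm_deriv_le {f : ℂ → ℂ} (hf : IsConvexOfOrder 0 f) {ρ : ℝ} (hρ : 0 < ρ)
    (hc : ball (0 : ℂ) ρ ⊆ f '' ball 0 1) {z : ℂ} (hz : z ∈ ball (0 : ℂ) 1) (hz0 : z ≠ 0) :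
    ρ * ‖deriv f z‖ ≤ (deriv f z * conj (f z / z)).re := by
  have hinj := hf.injOn
  have hsupp := fun ζ => hf.re_sub_mul_conj_pos (ζ := ζ) hz
  obtain ⟨hd, hf0, -, hcv⟩ := hf
  unfold unitDisk at hd hcv
  have hd0 : deriv f z ≠ 0 := (hcv z hz).1
  have hr : 0 < ‖z‖ := norm_pos_iff.2 hz0
  have hpre : ∀ w ∈ ball (0 : ℂ) ρ, ∃ ζ ∈ ball (0 : ℂ) 1, f ζ = w ∧ ‖ζ‖ ≤ ‖w‖ / ρ := by
    intro w hw
    have hinv := (differentiableOn_invFunOn isOpen_ball hd (fun z hz => (hcv z hz).1) hinj).mono hc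
    have hinv0 : Function.invFunOn f (ball 0 1) 0 = 0 := by
      have h := hinj.leftInvOn_invFunOn (mem_ball_self one_pos)
      rwa [hf0] at h
    refine ⟨_, Function.invFunOn_mem (hc hw), Function.invFunOn_eq (hc hw), ?_⟩
    have := dist_le_div_mul_dist_of_mapsTo_ball (R₂ := 1) hinv (fun v hv => by
      rw [hinv0]
      exact ball_subset_closedBall (Function.invFunOn_mem (hc hv))) hw
    rw [hinv0, dist_zero_right, dist_zero_right] at this
    exact this.trans_eq (by ring)
  set c := z * deriv f z with hcdef
  have hc0 : 0 < ‖c‖ := norm_pos_iff.2 (mul_ne_zero hz0 hd0)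
  have hle : ‖z‖ * ρ * ‖c‖ ≤ (f z * conj c).re := by
    have hlt : ∀ s ∈ Ioo 0 (‖z‖ * ρ), s * ‖c‖ ≤ (f z * conj c).re := by
      intro s hs
      have hz1 : ‖z‖ < 1 := by simpa using hz
      set w : ℂ := (s / ‖c‖ : ℝ) * c with hw
      have hwn : ‖w‖ = s := by
        rw [hw, norm_mul, norm_real, Real.norm_of_nonneg (by have := hs.1; positivity)]
        field_simp
      obtain ⟨ζ, hζ, hfζ, hζn⟩ := hpre w (by
        rw [mem_ball_zero_iff, hwn]
        exact hs.2.trans (by nlinarith))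
      have hζz : ‖ζ‖ < ‖z‖ := hζn.trans_lt (by rw [hwn, div_lt_iff₀ hρ]; exact hs.2)
      have h1 := hsupp ζ hζz.le (by rintro rfl; exact lt_irrefl _ hζz)
      rw [hfζ, sub_mul, sub_re, hw, mul_assoc, mul_conj, ← ofReal_mul, ofReal_re,
        normSq_eq_norm_sq] at h1
      have : s / ‖c‖ * ‖c‖ ^ 2 = s * ‖c‖ := by field_simp
      linarith
    rw [← le_div_iff₀ hc0]
    refine le_of_forall_lt_imp_le_of_dense fun s hs => ?_
    rcases le_or_gt s 0 with h | h
    · have h2 := hlt (‖z‖ * ρ / 2) ⟨by positivity, half_lt_self (by positivity)⟩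
      rw [← le_div_iff₀ hc0] at h2
      exact h.trans (le_trans (by positivity) h2)
    · rw [le_div_iff₀ hc0]
      exact hlt s ⟨h, hs⟩
  have h1 : (f z * conj c).re = ‖z‖ ^ 2 * (deriv f z * conj (f z / z)).re := by
    rw [← normSq_eq_norm_sq, ← re_ofReal_mul, ← conj_re, ← mul_conj, hcdef]
    congr 1
    have : conj z ≠ 0 := by simpa using hz0
    simp only [map_mul, conj_conj, map_div₀]
    field_simp
  rw [h1, hcdef, norm_mul] at hle
  have : 0 < ‖z‖ ^ 2 := by positivity
  nlinarith

/-- A starlike function is injective: in the logarithmic coordinate its logarithm has derivative of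
positive real part. -/
lemma injOn_of_re_deriv_mul_conj_pos {h P : ℂ → ℂ} (hP : DifferentiableOn ℂ P (ball 0 1))
    (hh : ∀ z ∈ ball (0 : ℂ) 1, h z = z * P z) (hPre : ∀ z ∈ ball (0 : ℂ) 1, 0 < (P z).re)
    (hre : ∀ z ∈ ball (0 : ℂ) 1, z ≠ 0 → 0 < (deriv h z * conj (P z)).re) :
    InjOn h (ball 0 1) := by
  have hP0 : ∀ z ∈ ball (0 : ℂ) 1, P z ≠ 0 := fun z hz h0 => by
    have := hPre z hz
    simp [h0] at this
  have hexp : ∀ ζ : ℂ, ζ.re < 0 → exp ζ ∈ ball (0 : ℂ) 1 := fun ζ hζ => by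
    simpa [norm_exp] using hζ
  set ψ : ℂ → ℂ := fun ζ => ζ + log (P (exp ζ)) with hψ
  have hψexp : ∀ ζ : ℂ, ζ.re < 0 → exp (ψ ζ) = h (exp ζ) := fun ζ hζ => by
    rw [hψ, exp_add, exp_log (hP0 _ (hexp ζ hζ)), hh _ (hexp ζ hζ)]
  have hψder : ∀ ζ ∈ {ζ : ℂ | ζ.re < 0},
      HasDerivAt ψ (deriv h (exp ζ) / P (exp ζ)) ζ := fun ζ hζ => by
    have hm := hexp ζ hζ
    have hPd := (hP.differentiableAt (isOpen_ball.mem_nhds hm)).hasDerivAt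
    have h1 := (hasDerivAt_id ζ).add
      ((hPd.comp ζ (hasDerivAt_exp ζ)).clog (Or.inl (hPre _ hm)))
    convert! h1 using 1
    have h2 : HasDerivAt h (1 * P (exp ζ) + exp ζ * deriv P (exp ζ)) (exp ζ) :=
      ((hasDerivAt_id (exp ζ)).mul hPd).congr_of_eventuallyEq
        (Filter.eventuallyEq_of_mem (isOpen_ball.mem_nhds hm) hh)
    rw [h2.deriv]
    have := hP0 _ hm
    simp only [Function.comp]
    field_simp
  have hψinj : InjOn ψ {ζ : ℂ | ζ.re < 0} := by
    refine injOn_of_convex_of_re_deriv_pos (convex_halfSpace_re_lt 0) hψder fun ζ hζ => ?_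
    have hm := hexp ζ hζ
    have hpos := hre _ hm (exp_ne_zero ζ)
    rw [div_eq_mul_inv, inv_def, ← mul_assoc, re_mul_ofReal]
    exact mul_pos hpos (inv_pos.2 (normSq_pos.2 (hP0 _ hm)))
  have hzero : ∀ z ∈ ball (0 : ℂ) 1, h z = 0 → z = 0 := fun z hz h0 => by
    rw [hh z hz] at h0
    exact (mul_eq_zero.1 h0).resolve_right (hP0 z hz)
  have h00 : h 0 = 0 := by simpa using hh 0 (mem_ball_self one_pos)
  intro a ha b hb hab
  by_cases ha0 : a = 0
  · subst ha0
    exact (hzero b hb (by rw [← hab, h00])).symm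
  by_cases hb0 : b = 0
  · subst hb0
    exact hzero a ha (by rw [hab, h00])
  have hlog : ∀ z ∈ ball (0 : ℂ) 1, z ≠ 0 → (log z).re < 0 := fun z hz hz0 => by
    rw [log_re]
    exact Real.log_neg (norm_pos_iff.2 hz0) (by simpa using hz)
  have hla := hlog a ha ha0
  have hlb := hlog b hb hb0
  have heq : exp (ψ (log a)) = exp (ψ (log b)) := by
    rw [hψexp _ hla, hψexp _ hlb, exp_log ha0, exp_log hb0, hab]
  obtain ⟨n, hn⟩ := exp_eq_exp_iff_exists_int.1 heq
  have hper : exp (log b + n * (2 * Real.pi * I)) = exp (log b) :=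
    exp_eq_exp_iff_exists_int.2 ⟨n, rfl⟩
  have hlog_eq : log a = log b + n * (2 * Real.pi * I) := by
    refine hψinj hla ?_ ?_
    · simpa using hlb
    · rw [hn]
      simp only [hψ]
      rw [hper]
      ring
  rw [← exp_log ha0, hlog_eq, hper, exp_log hb0]

/-- The analytic starlikeness condition implies that the image is starlike with respect to `0`. -/
lemma ofReal_mul_mem_image_of_re_pos {h : ℂ → ℂ} (hd : DifferentiableOn ℂ h (ball 0 1))
    (h0 : h 0 = 0)
    (hre : ∀ z ∈ ball (0 : ℂ) 1, z ≠ 0 → 0 < (deriv h z * conj (h z / z)).re)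
    {w : ℂ} (hw : w ∈ h '' ball 0 1) {t : ℝ} (ht : t ∈ Icc (0 : ℝ) 1) :
    (t : ℂ) * w ∈ h '' ball 0 1 := by
  obtain ⟨a, ha, haw⟩ := hw
  by_cases hw0 : w = 0
  · exact ⟨0, mem_ball_self one_pos, by simp [h0, hw0]⟩
  have ha1 : ‖a‖ < 1 := by simpa using ha
  have hsub : closedBall (0 : ℂ) ‖a‖ ⊆ ball 0 1 := closedBall_subset_ball ha1
  set S : Set ℝ := {τ | ((1 - τ : ℝ) : ℂ) * w ∈ h '' closedBall 0 ‖a‖} with hS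
  have hSclosed : IsClosed S :=
    ((isCompact_closedBall _ _).image_of_continuousOn (hd.continuousOn.mono hsub)).isClosed.preimage
      (by fun_prop : Continuous fun τ : ℝ => ((1 - τ : ℝ) : ℂ) * w)
  have hsubset : Icc (0 : ℝ) 1 ⊆ S := by
    refine (hSclosed.inter isClosed_Icc).Icc_subset_of_forall_exists_gt
      ⟨a, by simp, by simp [haw]⟩ ?_
    rintro x ⟨⟨z, hz, hzx⟩, hx⟩ y hy
    have hx1 : 0 < 1 - x := by linarith [hx.2]
    have hz1 := hsub hz
    have hhz : h z ≠ 0 := by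
      rw [hzx]
      exact mul_ne_zero (by exact_mod_cast hx1.ne') hw0
    have hz0 : z ≠ 0 := by
      rintro rfl
      exact hhz h0
    have hpos := hre z hz1 hz0
    have hd0 : deriv h z ≠ 0 := fun h' => by simp [h'] at hpos
    have hs : HasStrictDerivAt h (deriv h z) z :=
      (hd.analyticAt (isOpen_ball.mem_nhds hz1)).hasStrictDerivAt
    set G := hs.localInverse h (deriv h z) z hd0 with hG
    have hGz : G (h z) = z := HasStrictFDerivAt.localInverse_apply_image _
    have hGr : ∀ᶠ v in 𝓝 (h z), h (G v) = v := hs.eventually_right_inverse hd0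
    have hGd : HasDerivAt G (deriv h z)⁻¹ (h z) := (hs.to_localInverse hd0).hasDerivAt
    have hpath : HasDerivAt (fun τ : ℝ => ((1 - τ : ℝ) : ℂ) * w) (-w) x := by
      have := ((hasDerivAt_id x).const_sub 1).ofReal_comp.mul_const w
      simpa using this
    have hγ : HasDerivAt (fun τ : ℝ => G (((1 - τ : ℝ) : ℂ) * w)) ((deriv h z)⁻¹ * -w) x := by
      rw [hzx] at hGd
      exact hGd.comp x hpath
    have hnorm := hγ.norm_sq
    rw [← hzx, hGz] at hnorm
    have hneg : 2 * inner ℝ z ((deriv h z)⁻¹ * -w) < 0 := by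
      have hwz : w = ((1 - x)⁻¹ : ℝ) * h z := by
        rw [hzx, ← mul_assoc, ← ofReal_mul, inv_mul_cancel₀ hx1.ne']
        simp
      have hcalc : (deriv h z)⁻¹ * -w * conj z =
          ((-((1 - x)⁻¹ * (normSq z * (normSq (deriv h z))⁻¹)) : ℝ) : ℂ)
            * conj (deriv h z * conj (h z / z)) := by
        rw [hwz, inv_def]
        push_cast
        rw [normSq_eq_conj_mul_self (z := z)]
        simp only [map_mul, conj_conj]
        field_simp
      rw [Complex.inner, hcalc, re_ofReal_mul, conj_re]
      have h1 : 0 < normSq z := normSq_pos.2 hz0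
      have h2 : 0 < normSq (deriv h z) := normSq_pos.2 hd0
      have : 0 < (1 - x)⁻¹ * (normSq z * (normSq (deriv h z))⁻¹) := by positivity
      nlinarith
    have hev1 : ∀ᶠ τ in 𝓝[>] x, ‖G (((1 - τ : ℝ) : ℂ) * w)‖ ^ 2 < ‖z‖ ^ 2 := by
      have := (hasDerivAt_iff_tendsto_slope_left_right.1 hnorm).2.eventually_lt_const hneg
      filter_upwards [this, self_mem_nhdsWithin] with τ hτ hτx
      have hτx' : 0 < τ - x := sub_pos.2 hτx
      rw [slope_def_field, div_lt_iff₀ hτx', zero_mul, ← hzx, hGz] at hτ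
      linarith
    have hev2 : ∀ᶠ τ in 𝓝[>] x, h (G (((1 - τ : ℝ) : ℂ) * w)) = ((1 - τ : ℝ) : ℂ) * w := by
      rw [hzx] at hGr
      exact (hpath.continuousAt.eventually hGr).filter_mono nhdsWithin_le_nhds
    obtain ⟨τ, h1, h2, h3⟩ := (hev1.and (hev2.and (Ioc_mem_nhdsGT hy))).exists
    refine ⟨τ, ⟨_, ?_, h2⟩, h3⟩
    rw [mem_closedBall_zero_iff] at hz ⊢
    exact (lt_of_pow_lt_pow_left₀ 2 (norm_nonneg _) h1).le.trans hz
  have : (1 - t) ∈ S := hsubset ⟨by linarith [ht.2], by linarith [ht.1]⟩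
  rw [hS, mem_ofPred_eq, sub_sub_cancel] at this
  exact image_mono hsub this

lemma re_mul_re_pos_of_mul_norm_le {ρ : ℝ} {d p : ℂ} (hd : d ≠ 0) (hle : ρ * ‖d‖ ≤ (d * conj p).re)
    (him : |p.im| < ρ) : 0 < p.re * d.re := by
  have h1 : |d.im * p.im| ≤ ‖d‖ * |p.im| := by
    rw [abs_mul]
    exact mul_le_mul_of_nonneg_right (abs_im_le_norm d) (abs_nonneg _)
  have h2 : 0 < ‖d‖ := norm_pos_iff.2 hd
  have h3 := le_abs_self (d.im * p.im)
  simp only [mul_re, conj_re, conj_im] at hle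
  nlinarith

lemma re_mul_conj_add_pos {ρ : ℝ} {d p q : ℂ} (hd : d ≠ 0) (hle : ρ * ‖d‖ ≤ (d * conj p).re)
    (hp : |p.im| < ρ) (hq : |q.im| < ρ) (hpre : 0 < p.re) (hqre : 0 < q.re) :
    0 < (d * conj (p + q)).re := by
  have h0 : 0 < d.re := (pos_iff_pos_of_mul_pos (re_mul_re_pos_of_mul_norm_le hd hle hp)).1 hpre
  have h1 : |d.im * q.im| ≤ ‖d‖ * |q.im| := by
    rw [abs_mul]
    exact mul_le_mul_of_nonneg_right (abs_im_le_norm d) (abs_nonneg _)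
  have h2 : 0 < ‖d‖ := norm_pos_iff.2 hd
  have h3 := neg_abs_le (d.im * q.im)
  have h4 := mul_pos h0 hqre
  rw [map_add, mul_add, add_re]
  have h5 : (d * conj q).re = d.re * q.re + d.im * q.im := by simp
  rw [h5]
  nlinarith

lemma IsConvexOfOrder.re_dslope_pos {f : ℂ → ℂ} (hf : IsConvexOfOrder 0 f) {ρ : ℝ} (hρ : 0 < ρ)
    (hc : ball (0 : ℂ) ρ ⊆ f '' ball 0 1)
    (hi : ∀ z ∈ ball (0 : ℂ) 1, z ≠ 0 → |(f z / z).im| < ρ) :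
    ∀ z ∈ ball (0 : ℂ) 1, 0 < (dslope f 0 z).re := by
  have hle := fun z => hf.mul_norm_deriv_le hρ hc (z := z)
  obtain ⟨hd, hf0, hf1, hcv⟩ := hf
  unfold unitDisk at hd hcv
  have hcont : ContinuousOn (fun z => (dslope f 0 z).re) (ball 0 1) :=
    continuous_re.comp_continuousOn
      ((differentiableOn_dslope (ball_mem_nhds 0 one_pos)).2 hd).continuousOn
  have hne : ∀ z ∈ ball (0 : ℂ) 1, (dslope f 0 z).re ≠ 0 := by
    intro z hz
    by_cases hz0 : z = 0
    · simp [hz0, hf1]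
    rw [dslope_of_ne _ hz0, slope_def_field, hf0, sub_zero, sub_zero]
    exact (left_ne_zero_of_mul
      (re_mul_re_pos_of_mul_norm_le (hcv z hz).1 (hle z hz hz0) (hi z hz hz0)).ne')
  intro z hz
  by_contra hneg
  obtain ⟨y, hy, hy0⟩ := (convex_ball (0 : ℂ) 1).isPreconnected.intermediate_value hz
    (mem_ball_self one_pos) hcont ⟨not_lt.1 hneg, by simp [hf1]⟩
  exact hne y hy hy0

/-- if `f, g ∈ K(0)`, both images contain the disk `{|w| < ρ}` and
`|Im(f(z)/z)| < ρ`, `|Im(g(z)/z)| < ρ` on `𝔻 \ {0}`, then `(f+g)/2 ∈ S*`: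
it is injective on `𝔻` with image starlike with respect to `0`. -/
theorem avg_starlike_of_covering (ρ : ℝ) (hρ : 0 < ρ) (f g : ℂ → ℂ)
    (hf : IsConvexOfOrder 0 f) (hg : IsConvexOfOrder 0 g)
    (hfc : Metric.ball (0 : ℂ) ρ ⊆ f '' unitDisk)
    (hgc : Metric.ball (0 : ℂ) ρ ⊆ g '' unitDisk)
    (hfi : ∀ z ∈ unitDisk, z ≠ 0 → |(f z / z).im| < ρ)
    (hgi : ∀ z ∈ unitDisk, z ≠ 0 → |(g z / z).im| < ρ) :
    Set.InjOn (fun z => (f z + g z) / 2) unitDisk ∧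
    ∀ w ∈ (fun z => (f z + g z) / 2) '' unitDisk, ∀ t ∈ Set.Icc (0 : ℝ) 1,
      (t : ℂ) * w ∈ (fun z => (f z + g z) / 2) '' unitDisk := by
  have hfd := hf.1
  have hgd := hg.1
  unfold unitDisk at *
  have hdh : ∀ z ∈ ball (0 : ℂ) 1,
      deriv (fun z => (f z + g z) / 2) z = (deriv f z + deriv g z) / 2 := fun z hz =>
    (((hfd.differentiableAt (isOpen_ball.mem_nhds hz)).hasDerivAt.add
      (hgd.differentiableAt (isOpen_ball.mem_nhds hz)).hasDerivAt).div_const 2).deriv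
  have hfp := hf.re_dslope_pos hρ hfc hfi
  have hgp := hg.re_dslope_pos hρ hgc hgi
  have hslope : ∀ k : ℂ → ℂ, k 0 = 0 → ∀ z : ℂ, z ≠ 0 → dslope k 0 z = k z / z :=
    fun k hk z hz => by rw [dslope_of_ne _ hz, slope_def_field, hk, sub_zero, sub_zero]
  have hkey : ∀ z ∈ ball (0 : ℂ) 1, z ≠ 0 →
      0 < (deriv (fun z => (f z + g z) / 2) z * conj ((f z + g z) / 2 / z)).re := by
    intro z hz hz0
    have hfz := hfp z hz
    have hgz := hgp z hz
    rw [hslope f hf.2.1 z hz0] at hfz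
    rw [hslope g hg.2.1 z hz0] at hgz
    have h1 := re_mul_conj_add_pos (hf.2.2.2 z hz).1 (hf.mul_norm_deriv_le hρ hfc hz hz0)
      (hfi z hz hz0) (hgi z hz hz0) hfz hgz
    have h2 := re_mul_conj_add_pos (hg.2.2.2 z hz).1 (hg.mul_norm_deriv_le hρ hgc hz hz0)
      (hgi z hz hz0) (hfi z hz hz0) hgz hfz
    have h3 : (deriv f z + deriv g z) / 2 * conj ((f z + g z) / 2 / z)
        = ((1 / 4 : ℝ) : ℂ) * (deriv f z * conj (f z / z + g z / z)
          + deriv g z * conj (g z / z + f z / z)) := by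
      simp only [map_add, map_div₀, conj_ofNat]
      push_cast
      ring
    rw [hdh z hz, h3, re_ofReal_mul, add_re]
    linarith
  have hds : ∀ k : ℂ → ℂ, DifferentiableOn ℂ k (ball 0 1) →
      DifferentiableOn ℂ (dslope k 0) (ball 0 1) := fun k hk =>
    (differentiableOn_dslope (ball_mem_nhds 0 one_pos)).2 hk
  refine ⟨?_, fun w hw t ht => ?_⟩
  · refine injOn_of_re_deriv_mul_conj_pos (P := fun z => (dslope f 0 z + dslope g 0 z) / 2)
      (((hds f hfd).add (hds g hgd)).div_const 2) (fun z hz => ?_) (fun z hz => ?_)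
      fun z hz hz0 => ?_
    · by_cases hz0 : z = 0
      · simp [hz0, hf.2.1, hg.2.1]
      · rw [hslope f hf.2.1 z hz0, hslope g hg.2.1 z hz0]
        field_simp
    · have h1 := hfp z hz
      have h2 := hgp z hz
      rw [show (2 : ℂ) = ((2 : ℝ) : ℂ) by simp, div_ofReal_re, add_re]
      positivity
    · convert hkey z hz hz0 using 4
      rw [hslope f hf.2.1 z hz0, hslope g hg.2.1 z hz0]
      ring
  · exact ofReal_mul_mem_image_of_re_pos ((hfd.add hgd).div_const 2)
      (by simp [hf.2.1, hg.2.1]) hkey hw ht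
end

section
/- Let f ∈ K(3/5). Then for all z ∈ 𝔻 \ {0}, |Im(f(z)/z)| < 5(2^{1/5} − 1); that is, M(3/5) = sup_{0<θ<π} Im(e^{−iθ} k_{3/5}(e^{iθ})) < 5(2^{1/5} − 1) = −k_{3/5}(−1), and hence the imaginary part of f(z)/z is bounded by this constant. -/
/-- If `Re g` restricted to the circle through `z₀` is maximal at `z₀`, then `z₀ g'(z₀)` is real. -/
theorem im_mul_deriv_eq_zero_of_circle_max {g : ℂ → ℂ} {g' z₀ : ℂ} (hg : HasDerivAt g g' z₀)
    (hmax : ∀ z, ‖z‖ = ‖z₀‖ → (g z).re ≤ (g z₀).re) : (z₀ * g').im = 0 := by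
  have h1 : HasDerivAt (fun s : ℂ => g (z₀ * Complex.exp (s * Complex.I)))
      (g' * (z₀ * Complex.I)) ((0 : ℝ) : ℂ) := by
    have he : HasDerivAt (fun s : ℂ => z₀ * Complex.exp (s * Complex.I))
        (z₀ * Complex.I) ((0 : ℝ) : ℂ) := by
      have := (((hasDerivAt_id ((0 : ℝ) : ℂ)).mul_const Complex.I).cexp).const_mul z₀
      simpa using this
    refine HasDerivAt.comp _ ?_ he
    simpa using hg
  have h2 := h1.real_of_complex
  have h3 : IsLocalMax (fun s : ℝ => (g (z₀ * Complex.exp (s * Complex.I))).re) 0 := by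
    refine Filter.Eventually.of_forall fun s => ?_
    have := hmax (z₀ * Complex.exp (s * Complex.I)) (by simp [Complex.norm_exp_ofReal_mul_I])
    simpa using this
  have h4 := h3.hasDerivAt_eq_zero h2
  simp only [Complex.mul_re, Complex.mul_im, Complex.I_re, Complex.I_im] at h4 ⊢
  linarith

/-- A one-sided bound for the radial derivative of `Re g`. -/
theorem le_re_mul_deriv_of_radial_bound {g : ℂ → ℂ} {g' z₀ : ℂ} {c : ℝ}
    (hg : HasDerivAt g g' z₀)
    (hle : ∀ t : ℝ, 0 < t → t < 1 → (g (t * z₀)).re ≤ (g z₀).re - (1 - t) * c) :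
    c ≤ (z₀ * g').re := by
  have h1 : HasDerivAt (fun s : ℂ => g (s * z₀)) (g' * z₀) ((1 : ℝ) : ℂ) := by
    have he : HasDerivAt (fun s : ℂ => s * z₀) z₀ ((1 : ℝ) : ℂ) := by
      simpa using (hasDerivAt_id ((1 : ℝ) : ℂ)).mul_const z₀
    refine HasDerivAt.comp _ ?_ he
    simpa using hg
  have h2 := h1.real_of_complex
  have h3 : Filter.Tendsto (slope (fun t : ℝ => (g (t * z₀)).re) 1)
      (nhdsWithin 1 (Set.Iio 1)) (nhds (g' * z₀).re) :=
    (hasDerivAt_iff_tendsto_slope.1 h2).mono_left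
      (nhdsWithin_mono _ fun x hx => ne_of_lt hx)
  rw [mul_comm]
  refine ge_of_tendsto h3 ?_
  have h4 : Set.Ioo (0 : ℝ) 1 ∈ nhdsWithin (1 : ℝ) (Set.Iio 1) :=
    Ioo_mem_nhdsLT one_pos
  filter_upwards [h4] with t ht
  have h5 := hle t ht.1 ht.2
  rw [slope_def_field, le_div_iff_of_neg (by linarith [ht.2])]
  simp only [Complex.ofReal_one, one_mul]
  linarith

/-- **Jack's lemma**. -/
theorem jack_lemma {ω : ℂ → ℂ} {ω' z₀ : ℂ} {r : ℝ} (hr : 0 < r) (hz₀ : z₀ ≠ 0)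
    (hω : HasDerivAt ω ω' z₀) (hd : DifferentiableOn ℂ ω (Metric.ball 0 ‖z₀‖))
    (h0 : ω 0 = 0) (hle : ∀ z, ‖z‖ ≤ ‖z₀‖ → ‖ω z‖ ≤ r) (heq : ‖ω z₀‖ = r) :
    ∃ m : ℝ, 1 ≤ m ∧ z₀ * ω' = m * ω z₀ := by
  have hz : 0 < ‖z₀‖ := norm_pos_iff.2 hz₀
  set a := ω z₀ with ha
  have hane : a ≠ 0 := by rw [← norm_pos_iff, heq]; exact hr
  have hg : HasDerivAt (fun z => ω z * (starRingEnd ℂ) a) (ω' * (starRingEnd ℂ) a) z₀ :=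
    hω.mul_const _
  have haa : a * (starRingEnd ℂ) a = ((r ^ 2 : ℝ) : ℂ) := by
    rw [Complex.mul_conj, Complex.normSq_eq_norm_sq, heq]
  have hre : ∀ z, (ω z * (starRingEnd ℂ) a).re ≤ ‖ω z‖ * r := fun z => by
    refine (Complex.re_le_norm _).trans ?_
    simp [heq]
  have hz₀re : (ω z₀ * (starRingEnd ℂ) a).re = r ^ 2 := by
    rw [← ha, haa, Complex.ofReal_re]
  have him : (z₀ * (ω' * (starRingEnd ℂ) a)).im = 0 := by
    refine im_mul_deriv_eq_zero_of_circle_max hg fun z hzn => ?_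
    rw [hz₀re]
    have := hle z hzn.le
    nlinarith [hre z]
  have hrad : r ^ 2 ≤ (z₀ * (ω' * (starRingEnd ℂ) a)).re := by
    refine le_re_mul_deriv_of_radial_bound hg fun t ht0 ht1 => ?_
    rw [hz₀re]
    have hmem : (t : ℂ) * z₀ ∈ Metric.ball (0 : ℂ) ‖z₀‖ := by
      rw [mem_ball_zero_iff, norm_mul, Complex.norm_real, Real.norm_of_nonneg ht0.le]
      nlinarith
    have := Complex.dist_le_div_mul_dist_of_mapsTo_ball (R₂ := r) hd (fun z hz => by
      rw [h0, mem_closedBall_zero_iff]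
      exact hle z (mem_ball_zero_iff.1 hz).le) hmem
    rw [h0, dist_zero_right, dist_zero_right, norm_mul, Complex.norm_real,
      Real.norm_of_nonneg ht0.le] at this
    have h6 : r / ‖z₀‖ * (t * ‖z₀‖) = t * r := by field_simp
    rw [h6] at this
    nlinarith [hre (t * z₀)]
  refine ⟨(z₀ * (ω' * (starRingEnd ℂ) a)).re / r ^ 2, ?_, ?_⟩
  · rw [le_div_iff₀ (by positivity)]; linarith
  · have hreal : z₀ * (ω' * (starRingEnd ℂ) a) =
        (((z₀ * (ω' * (starRingEnd ℂ) a)).re : ℝ) : ℂ) := by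
      apply Complex.ext
      · simp
      · rw [him, Complex.ofReal_im]
    have hca : (starRingEnd ℂ) a ≠ 0 := by simpa using hane
    apply mul_right_cancel₀ hca
    rw [mul_assoc, mul_assoc, haa, hreal]
    have : (r : ℂ) ≠ 0 := by exact_mod_cast hr.ne'
    push_cast
    field_simp
    simp

/-- A holomorphic injection with nonvanishing derivative has a holomorphic inverse. -/
theorem hasDerivAt_invFunOn {h : ℂ → ℂ} {U : Set ℂ} (hU : IsOpen U)
    (hd : DifferentiableOn ℂ h U) (hinj : Set.InjOn h U) {ζ : ℂ} (hζ : ζ ∈ U)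
    (hne : deriv h ζ ≠ 0) :
    HasDerivAt (Function.invFunOn h U) (deriv h ζ)⁻¹ (h ζ) := by
  have hleft : ∀ x ∈ U, Function.invFunOn h U (h x) = x := fun x hx =>
    hinj.leftInvOn_invFunOn hx
  have hs : HasStrictDerivAt h (deriv h ζ) ζ :=
    (hd.analyticAt (hU.mem_nhds hζ)).hasStrictDerivAt
  have hmap := hs.map_nhds_eq hne
  refine HasDerivAt.of_local_left_inverse (f := h) ?_ ?_ hne ?_
  · rw [ContinuousAt, hleft ζ hζ, ← hmap, Filter.tendsto_map'_iff]
    refine Filter.Tendsto.congr' ?_ Filter.tendsto_id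
    filter_upwards [hU.mem_nhds hζ] with x hx
    exact (hleft x hx).symm
  · rw [hleft ζ hζ]; exact hs.hasDerivAt
  · rw [← hmap, Filter.eventually_map]
    filter_upwards [hU.mem_nhds hζ] with x hx
    rw [hleft x hx]

/-- The removable-singularity quotient `f(z)/z` satisfies `p + z p' = f'`. -/
theorem dslope_zero_add_mul_deriv {f : ℂ → ℂ} (hf : DifferentiableOn ℂ f (Metric.ball 0 1))
    (hf0 : f 0 = 0) {z : ℂ} (hz : z ∈ Metric.ball (0 : ℂ) 1) :
    dslope f 0 z + z * deriv (dslope f 0) z = deriv f z := by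
  have hd : DifferentiableOn ℂ (dslope f 0) (Metric.ball 0 1) :=
    (Complex.differentiableOn_dslope (Metric.ball_mem_nhds _ one_pos)).2 hf
  have hmul : f = fun z => z * dslope f 0 z := by
    funext z
    have := sub_smul_dslope f 0 z
    simpa [hf0] using this.symm
  have h1 : HasDerivAt (fun z => z * dslope f 0 z)
      (1 * dslope f 0 z + z * deriv (dslope f 0) z) z :=
    (hasDerivAt_id z).mul
      (hd.differentiableAt (Metric.isOpen_ball.mem_nhds hz)).hasDerivAt
  rw [← hmul] at h1
  rw [h1.deriv, one_mul]

/-- The derivative `(1 - z)^(-4/5)` of the extremal function of order `3/5`. -/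
noncomputable def extremalDeriv (z : ℂ) : ℂ := Complex.exp (-(4 / 5) * Complex.log (1 - z))

/-- The inverse `1 - w^(-5/4)` of `extremalDeriv`. -/
noncomputable def extremalDerivInv (w : ℂ) : ℂ := 1 - Complex.exp (-(5 / 4) * Complex.log w)

theorem one_sub_mem_slitPlane {z : ℂ} (hz : z ∈ Metric.ball (0 : ℂ) 1) :
    1 - z ∈ Complex.slitPlane := by
  rw [mem_ball_zero_iff] at hz
  have := (Complex.re_le_norm z).trans_lt hz
  exact Or.inl (by simpa using this)

theorem extremalDeriv_ne_zero (z : ℂ) : extremalDeriv z ≠ 0 := Complex.exp_ne_zero _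

theorem hasDerivAt_extremalDeriv {z : ℂ} (hz : 1 - z ∈ Complex.slitPlane) :
    HasDerivAt extremalDeriv (4 / 5 / (1 - z) * extremalDeriv z) z := by
  have h1 : HasDerivAt (fun z : ℂ => 1 - z) (-1) z := by
    simpa using (hasDerivAt_id z).const_sub 1
  have h2 := ((h1.clog hz).const_mul (-(4 / 5) : ℂ)).cexp
  refine HasDerivAt.congr_deriv (f := extremalDeriv) h2 ?_
  rw [extremalDeriv]
  ring

theorem log_exp_mul_of_abs_im_lt {L : ℂ} (hL : |L.im| < Real.pi / 2) {c : ℝ} (hc : |c| ≤ 1) :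
    Complex.log (Complex.exp (c * L)) = c * L := by
  have h : |((c : ℂ) * L).im| < Real.pi := by
    simp only [Complex.mul_im, Complex.ofReal_re, Complex.ofReal_im, zero_mul, add_zero, abs_mul]
    nlinarith [abs_nonneg L.im, abs_nonneg c, Real.pi_pos]
  exact Complex.log_exp (abs_lt.1 h).1 (abs_lt.1 h).2.le

/-- Logarithmic coordinates on the unit disk: `z = 1 - exp (-L)`. -/
theorem exists_log_coordinate {z : ℂ} (hz : z ∈ Metric.ball (0 : ℂ) 1) :
    ∃ L : ℂ, |L.im| < Real.pi / 2 ∧ 1 / 2 < (Complex.exp L).re ∧ z = 1 - Complex.exp (-L) ∧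
      extremalDeriv z = Complex.exp ((4 / 5 : ℝ) * L) := by
  have hs := one_sub_mem_slitPlane hz
  have hne := Complex.slitPlane_ne_zero hs
  rw [mem_ball_zero_iff] at hz
  have hre : 0 < (1 - z).re := by
    have := (Complex.re_le_norm z).trans_lt hz
    simpa using this
  refine ⟨-Complex.log (1 - z), ?_, ?_, ?_, ?_⟩
  · rw [Complex.neg_im, abs_neg, Complex.log_im]
    exact Complex.abs_arg_lt_pi_div_two_iff.2 (Or.inl hre)
  · rw [Complex.exp_neg, Complex.exp_log hne, Complex.inv_re,
      lt_div_iff₀ (Complex.normSq_pos.2 hne)]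
    have : Complex.normSq z < 1 := by
      rw [Complex.normSq_eq_norm_sq]
      nlinarith [norm_nonneg z]
    simp only [Complex.normSq_apply, Complex.sub_re, Complex.sub_im, Complex.one_re,
      Complex.one_im] at this ⊢
    nlinarith
  · rw [neg_neg, Complex.exp_log hne]; ring
  · rw [extremalDeriv]; congr 1; push_cast; ring

theorem one_sub_exp_neg_mem_ball {L : ℂ} (hL : 1 / 2 < (Complex.exp L).re) :
    1 - Complex.exp (-L) ∈ Metric.ball (0 : ℂ) 1 := by
  rw [mem_ball_zero_iff, ← sq_lt_one_iff₀ (norm_nonneg _), ← Complex.normSq_eq_norm_sq,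
    Complex.exp_neg]
  set X := Complex.exp L
  have hX : X ≠ 0 := Complex.exp_ne_zero L
  have hpos := Complex.normSq_pos.2 hX
  have h1 : 1 - X⁻¹ = (X - 1) / X := by field_simp
  rw [h1, Complex.normSq_div, div_lt_one hpos]
  simp only [Complex.normSq_apply, Complex.sub_re, Complex.sub_im, Complex.one_re,
      Complex.one_im]
  nlinarith

theorem extremalDerivInv_exp {L : ℂ} (hL : |L.im| < Real.pi / 2) :
    extremalDerivInv (Complex.exp ((4 / 5 : ℝ) * L)) = 1 - Complex.exp (-L) := by
  rw [extremalDerivInv, log_exp_mul_of_abs_im_lt hL (by norm_num [abs_le])]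
  congr 2
  push_cast
  ring

theorem extremalDeriv_one_sub_exp {L : ℂ} (hL : |L.im| < Real.pi / 2) :
    extremalDeriv (1 - Complex.exp (-L)) = Complex.exp ((4 / 5 : ℝ) * L) := by
  have := log_exp_mul_of_abs_im_lt (c := -1) hL (by norm_num)
  rw [extremalDeriv, sub_sub_cancel]
  simp only [Complex.ofReal_neg, Complex.ofReal_one, neg_mul, one_mul] at this
  rw [this]
  congr 1
  push_cast
  ring

theorem extremalDerivInv_extremalDeriv {z : ℂ} (hz : z ∈ Metric.ball (0 : ℂ) 1) :
    extremalDerivInv (extremalDeriv z) = z := by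
  obtain ⟨L, hL, -, h2, h3⟩ := exists_log_coordinate hz
  rw [h3, extremalDerivInv_exp hL, h2]

theorem extremalDeriv_mem_slitPlane {z : ℂ} (hz : z ∈ Metric.ball (0 : ℂ) 1) :
    extremalDeriv z ∈ Complex.slitPlane := by
  obtain ⟨L, hL, -, -, h3⟩ := exists_log_coordinate hz
  rw [h3]
  left
  rw [Complex.exp_re]
  refine mul_pos (Real.exp_pos _) (Real.cos_pos_of_mem_Ioo ?_)
  rw [abs_lt] at hL
  simp only [Complex.mul_im, Complex.ofReal_re, Complex.ofReal_im, zero_mul, add_zero]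
  constructor <;> linarith [Real.pi_pos]

theorem hasDerivAt_extremalDerivInv {z : ℂ} (hz : z ∈ Metric.ball (0 : ℂ) 1) :
    HasDerivAt extremalDerivInv (4 / 5 / (1 - z) * extremalDeriv z)⁻¹ (extremalDeriv z) := by
  have hs := extremalDeriv_mem_slitPlane hz
  have h1 := ((((hasDerivAt_id (extremalDeriv z)).clog hs).const_mul
    (-(5 / 4) : ℂ)).cexp).const_sub 1
  have h2 := extremalDerivInv_extremalDeriv hz
  have hne := Complex.slitPlane_ne_zero (one_sub_mem_slitPlane hz)
  have hne' := extremalDeriv_ne_zero z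
  have h3 : Complex.exp (-(5 / 4) * Complex.log (extremalDeriv z)) = 1 - z := by
    rw [extremalDerivInv] at h2
    linear_combination -h2
  refine HasDerivAt.congr_deriv (f := extremalDerivInv) h1 ?_
  simp only [id]
  rw [h3]
  field_simp

theorem cos_rpow_mul_cos_rpow_le {a b : ℝ} (ha : |a| < Real.pi / 2) (hb : |b| < Real.pi / 2) :
    Real.cos a ^ (4 / 5 : ℝ) * Real.cos b ^ (1 / 5 : ℝ) ≤ Real.cos (4 / 5 * a + 1 / 5 * b) := by
  rw [abs_lt] at ha hb
  have hca := (Real.cos_pos_of_mem_Ioo ha).le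
  have hcb := (Real.cos_pos_of_mem_Ioo hb).le
  refine (Real.geom_mean_le_arith_mean2_weighted (by norm_num) (by norm_num) hca hcb
    (by norm_num)).trans ?_
  have := strictConcaveOn_cos_Icc.concaveOn.2 ⟨ha.1.le, ha.2.le⟩ ⟨hb.1.le, hb.2.le⟩
    (show (0 : ℝ) ≤ 4 / 5 by norm_num) (show (0 : ℝ) ≤ 1 / 5 by norm_num) (by norm_num)
  simpa only [smul_eq_mul] using this

/-- The supporting-line estimate for the image of `extremalDeriv`. -/
theorem lt_re_exp_mul_of_half_lt {L : ℂ} (hL : |L.im| < Real.pi / 2)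
    (hX : 1 / 2 < (Complex.exp L).re) {b : ℝ} (hb : |b| < Real.pi / 2) :
    (1 / 2 : ℝ) ^ (4 / 5 : ℝ) * Real.cos b ^ (1 / 5 : ℝ) <
      (Complex.exp ((4 / 5 : ℝ) * L) * Complex.exp ((1 / 5 * b : ℝ) * Complex.I)).re := by
  have hcb := Real.cos_pos_of_mem_Ioo (abs_lt.1 hb)
  have hcL := Real.cos_pos_of_mem_Ioo (abs_lt.1 hL)
  rw [Complex.exp_re] at hX
  rw [← Complex.exp_add, Complex.exp_re]
  have h1 : (((4 / 5 : ℝ) : ℂ) * L + ((1 / 5 * b : ℝ) : ℂ) * Complex.I).re = L.re * (4 / 5) := by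
    simp; ring
  have h2 : (((4 / 5 : ℝ) : ℂ) * L + ((1 / 5 * b : ℝ) : ℂ) * Complex.I).im
      = 4 / 5 * L.im + 1 / 5 * b := by
    simp
  rw [h1, h2, Real.exp_mul]
  have h3 := cos_rpow_mul_cos_rpow_le hL hb
  have h4 : (1 / 2 : ℝ) ^ (4 / 5 : ℝ) < (Real.exp L.re * Real.cos L.im) ^ (4 / 5 : ℝ) :=
    Real.rpow_lt_rpow (by norm_num) hX (by norm_num)
  rw [Real.mul_rpow (Real.exp_pos _).le hcL.le] at h4
  calc (1 / 2 : ℝ) ^ (4 / 5 : ℝ) * Real.cos b ^ (1 / 5 : ℝ)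
      < Real.exp L.re ^ (4 / 5 : ℝ) * Real.cos L.im ^ (4 / 5 : ℝ) * Real.cos b ^ (1 / 5 : ℝ) :=
        mul_lt_mul_of_pos_right h4 (Real.rpow_pos_of_pos hcb _)
    _ = Real.exp L.re ^ (4 / 5 : ℝ) * (Real.cos L.im ^ (4 / 5 : ℝ) * Real.cos b ^ (1 / 5 : ℝ)) := by
        ring
    _ ≤ _ := mul_le_mul_of_nonneg_left h3 (Real.rpow_nonneg (Real.exp_pos _).le _)

theorem re_exp_mul_exp_I_pos {L : ℂ} (hL : |L.im| < Real.pi / 2) {c : ℝ}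
    (hc : |c| ≤ Real.pi / 10) :
    0 < (Complex.exp ((4 / 5 : ℝ) * L) * Complex.exp (c * Complex.I)).re := by
  rw [← Complex.exp_add, Complex.exp_re]
  refine mul_pos (Real.exp_pos _) (Real.cos_pos_of_mem_Ioo ?_)
  rw [abs_lt] at hL
  rw [abs_le] at hc
  simp only [Complex.add_im, Complex.mul_im, Complex.ofReal_re, Complex.ofReal_im, zero_mul,
    add_zero, Complex.I_re, Complex.I_im, mul_one, mul_zero]
  constructor <;> linarith

/-- The function `extremalDeriv` has convex image. -/
theorem convex_extremalDeriv_image : Convex ℝ (extremalDeriv '' Metric.ball (0 : ℂ) 1) := by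
  rw [convex_iff_forall_pos]
  rintro _ ⟨z₁, hz₁, rfl⟩ _ ⟨z₂, hz₂, rfl⟩ s t hs ht hst
  obtain ⟨L₁, hL₁, hX₁, -, h₁⟩ := exists_log_coordinate hz₁
  obtain ⟨L₂, hL₂, hX₂, -, h₂⟩ := exists_log_coordinate hz₂
  rw [h₁, h₂]
  set w := s • Complex.exp ((4 / 5 : ℝ) * L₁) + t • Complex.exp ((4 / 5 : ℝ) * L₂) with hw
  have hlin : ∀ c : ℂ, (w * c).re = s * (Complex.exp ((4 / 5 : ℝ) * L₁) * c).re +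
      t * (Complex.exp ((4 / 5 : ℝ) * L₂) * c).re := fun c => by
    rw [hw, add_mul, Complex.add_re, smul_mul_assoc, smul_mul_assoc, Complex.smul_re,
      Complex.smul_re, smul_eq_mul, smul_eq_mul]
  have hsec : ∀ c : ℝ, |c| ≤ Real.pi / 10 → 0 < (w * Complex.exp (c * Complex.I)).re :=
    fun c hc => by
      rw [hlin]
      have := re_exp_mul_exp_I_pos hL₁ hc
      have := re_exp_mul_exp_I_pos hL₂ hc
      positivity
  have hw0 : w ≠ 0 := by
    intro h0
    have := hsec 0 (by simp; positivity)
    simp [h0] at this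
  have hρ : 0 < ‖w‖ := norm_pos_iff.2 hw0
  have hpol : ∀ c : ℝ, (w * Complex.exp (c * Complex.I)).re = ‖w‖ * Real.cos (w.arg + c) :=
    fun c => by
      conv_lhs => rw [← Complex.norm_mul_exp_arg_mul_I w]
      rw [mul_assoc, ← Complex.exp_add, ← add_mul, ← Complex.ofReal_add, Complex.re_ofReal_mul,
        Complex.exp_ofReal_mul_I_re]
  have harg : |w.arg| < 2 * Real.pi / 5 := by
    have hpi := Real.pi_pos
    have h0 := hsec 0 (by simp; positivity)
    have hp := hsec (Real.pi / 10) (by rw [abs_of_pos (by positivity)])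
    have hm := hsec (-(Real.pi / 10)) (by rw [abs_neg, abs_of_pos (by positivity)])
    rw [hpol] at h0 hp hm
    rw [add_zero] at h0
    have h0' := pos_of_mul_pos_right h0 hρ.le
    have hp' := pos_of_mul_pos_right hp hρ.le
    have hm' := pos_of_mul_pos_right hm hρ.le
    have h00 := abs_le.1 (Complex.abs_arg_le_pi w)
    rw [abs_lt]
    constructor
    · by_contra! hcon
      have := Real.cos_nonpos_of_pi_div_two_le_of_le (x := -(w.arg + -(Real.pi / 10)))
        (by linarith) (by linarith)
      rw [Real.cos_neg] at this
      linarith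
    · by_contra! hcon
      have := Real.cos_nonpos_of_pi_div_two_le_of_le (x := (w.arg + (Real.pi / 10)))
        (by linarith) (by linarith)
      linarith
  have hb : |5 / 4 * w.arg| < Real.pi / 2 := by
    rw [abs_mul, abs_of_pos (by norm_num : (0 : ℝ) < 5 / 4)]
    linarith
  have hcos := Real.cos_pos_of_mem_Ioo (abs_lt.1 hb)
  have hkey : (1 / 2 : ℝ) ^ (4 / 5 : ℝ) * Real.cos (5 / 4 * w.arg) ^ (1 / 5 : ℝ) <
      ‖w‖ * Real.cos (5 / 4 * w.arg) := by
    have e : w.arg + 1 / 5 * (5 / 4 * w.arg) = 5 / 4 * w.arg := by ring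
    have h := hpol (1 / 5 * (5 / 4 * w.arg))
    rw [e, hlin] at h
    rw [← h]
    have g1 := lt_re_exp_mul_of_half_lt hL₁ hX₁ hb
    have g2 := lt_re_exp_mul_of_half_lt hL₂ hX₂ hb
    have hs' : s = 1 - t := by linarith
    subst hs'
    nlinarith
  set C := Real.cos (5 / 4 * w.arg) with hC
  have hkey2 : 1 / 2 < ‖w‖ ^ (5 / 4 : ℝ) * C := by
    have g := Real.rpow_lt_rpow (by positivity) hkey (show (0 : ℝ) < 5 / 4 by norm_num)
    rw [Real.mul_rpow (by positivity) (by positivity), Real.mul_rpow hρ.le hcos.le,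
      ← Real.rpow_mul (by norm_num), ← Real.rpow_mul hcos.le] at g
    have e1 : C ^ (5 / 4 : ℝ) = C * C ^ (1 / 5 * (5 / 4) : ℝ) := by
      nth_rewrite 2 [← Real.rpow_one C]
      rw [← Real.rpow_add hcos]
      norm_num
    rw [e1, ← mul_assoc] at g
    have g' := lt_of_mul_lt_mul_right g (by positivity)
    norm_num at g' ⊢
    exact g'
  have him : ((5 / 4 : ℝ) * Complex.log w).im = 5 / 4 * w.arg := by
    rw [Complex.im_ofReal_mul, Complex.log_im]
  have hIm : |((5 / 4 : ℝ) * Complex.log w).im| < Real.pi / 2 := by rwa [him]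
  refine ⟨1 - Complex.exp (-((5 / 4 : ℝ) * Complex.log w)), one_sub_exp_neg_mem_ball ?_, ?_⟩
  · rw [Complex.exp_re, him, Complex.re_ofReal_mul, Complex.log_re, mul_comm (5 / 4 : ℝ),
      Real.exp_mul, Real.exp_log hρ]
    exact hkey2
  · rw [extremalDeriv_one_sub_exp hIm]
    rw [← mul_assoc, ← Complex.ofReal_mul]
    norm_num
    exact Complex.exp_log hw0

theorem differentiableOn_extremalDeriv : DifferentiableOn ℂ extremalDeriv (Metric.ball 0 1) :=
  fun _ hz => (hasDerivAt_extremalDeriv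
    (one_sub_mem_slitPlane hz)).differentiableAt.differentiableWithinAt

theorem extremalDerivInv_mem_ball {w : ℂ} (hw : w ∈ extremalDeriv '' Metric.ball (0 : ℂ) 1) :
    extremalDerivInv w ∈ Metric.ball (0 : ℂ) 1 := by
  obtain ⟨z, hz, rfl⟩ := hw
  rwa [extremalDerivInv_extremalDeriv hz]

theorem differentiableAt_extremalDerivInv {w : ℂ}
    (hw : w ∈ extremalDeriv '' Metric.ball (0 : ℂ) 1) : DifferentiableAt ℂ extremalDerivInv w := by
  obtain ⟨z, hz, rfl⟩ := hw
  exact (hasDerivAt_extremalDerivInv hz).differentiableAt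

/-- Each concentric disk has convex image under `extremalDeriv`, in the form of the
supporting half-plane at a boundary point. -/
theorem re_extremalDeriv_sub_div_mul_conj_nonpos {ξ ζ : ℂ} (hζ : ζ ∈ Metric.ball (0 : ℂ) 1)
    (hζ0 : ζ ≠ 0) (hξζ : ‖ξ‖ ≤ ‖ζ‖) :
    ((extremalDeriv ξ - extremalDeriv ζ) / (4 / 5 / (1 - ζ) * extremalDeriv ζ) *
      (starRingEnd ℂ) ζ).re ≤ 0 := by
  have hζn := mem_ball_zero_iff.1 hζ
  have hζpos : 0 < ‖ζ‖ := norm_pos_iff.2 hζ0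
  have hrot : ∀ z ∈ Metric.ball (0 : ℂ) 1, z * (ξ / ζ) ∈ Metric.ball (0 : ℂ) 1 := fun z hz => by
    rw [mem_ball_zero_iff] at hz ⊢
    rw [norm_mul, norm_div]
    have : ‖ξ‖ / ‖ζ‖ ≤ 1 := (div_le_one hζpos).2 hξζ
    nlinarith [norm_nonneg z, div_nonneg (norm_nonneg ξ) (norm_nonneg ζ)]
  have hγ : ∀ t : ℝ, 0 < t → t < 1 →
      ‖extremalDerivInv (t * extremalDeriv ζ + (1 - t) * extremalDeriv ξ)‖ ≤ ‖ζ‖ := by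
    intro t ht0 ht1
    have hmem : ∀ z ∈ Metric.ball (0 : ℂ) 1,
        (t : ℂ) * extremalDeriv z + (1 - t) * extremalDeriv (z * (ξ / ζ)) ∈
          extremalDeriv '' Metric.ball (0 : ℂ) 1 := fun z hz => by
      have := convex_extremalDeriv_image (Set.mem_image_of_mem _ hz)
        (Set.mem_image_of_mem _ (hrot z hz)) ht0.le (sub_nonneg.2 ht1.le) (by ring)
      simpa only [Complex.real_smul, Complex.ofReal_sub, Complex.ofReal_one] using this
    have hd : DifferentiableOn ℂ (fun z => extremalDerivInv
        ((t : ℂ) * extremalDeriv z + (1 - t) * extremalDeriv (z * (ξ / ζ))))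
        (Metric.ball 0 1) := fun z hz => by
      have hz1 := differentiableOn_extremalDeriv.differentiableAt
        (Metric.isOpen_ball.mem_nhds hz)
      have hz2 := differentiableOn_extremalDeriv.differentiableAt
        (Metric.isOpen_ball.mem_nhds (hrot z hz))
      have hz3 : DifferentiableAt ℂ (fun z => extremalDeriv (z * (ξ / ζ))) z :=
        DifferentiableAt.comp (g := extremalDeriv) z hz2 (differentiableAt_id.mul_const _)
      exact ((differentiableAt_extremalDerivInv (hmem z hz)).comp z
        ((hz1.const_mul _).add (hz3.const_mul _))).differentiableWithinAt
    have := Complex.norm_le_norm_of_mapsTo_ball hd (fun z hz =>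
      Metric.ball_subset_closedBall (extremalDerivInv_mem_ball (hmem z hz)))
      (by
        have e : (t : ℂ) * extremalDeriv 0 + (1 - t) * extremalDeriv (0 * (ξ / ζ)) =
          extremalDeriv 0 := by rw [zero_mul]; ring
        rw [e]
        exact extremalDerivInv_extremalDeriv (Metric.mem_ball_self one_pos)) hζn
    rwa [mul_div_cancel₀ ξ hζ0] at this
  set D := 4 / 5 / (1 - ζ) * extremalDeriv ζ
  have hder : HasDerivAt (fun u : ℂ => extremalDerivInv
      (u * extremalDeriv ζ + (1 - u) * extremalDeriv ξ) * (starRingEnd ℂ) ζ)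
      (D⁻¹ * (extremalDeriv ζ - extremalDeriv ξ) * (starRingEnd ℂ) ζ) 1 := by
    have hin : HasDerivAt (fun u : ℂ => u * extremalDeriv ζ + (1 - u) * extremalDeriv ξ)
        (extremalDeriv ζ - extremalDeriv ξ) 1 := by
      have := ((hasDerivAt_id (1 : ℂ)).mul_const (extremalDeriv ζ)).add
        (((hasDerivAt_id (1 : ℂ)).const_sub 1).mul_const (extremalDeriv ξ))
      refine this.congr_deriv ?_
      ring
    refine (HasDerivAt.comp (h₂ := extremalDerivInv) (1 : ℂ) ?_ hin).mul_const _
    rw [one_mul, sub_self, zero_mul, add_zero]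
    exact hasDerivAt_extremalDerivInv hζ
  have hfin := le_re_mul_deriv_of_radial_bound (c := 0) hder fun t ht0 ht1 => by
    simp only [mul_one, one_mul, sub_self, zero_mul, add_zero, mul_zero, sub_zero]
    rw [extremalDerivInv_extremalDeriv hζ, Complex.mul_conj, Complex.ofReal_re,
      Complex.normSq_eq_norm_sq]
    refine (Complex.re_le_norm _).trans ?_
    rw [norm_mul, RCLike.norm_conj]
    nlinarith [hγ t ht0 ht1]
  have e : (extremalDeriv ξ - extremalDeriv ζ) / D * (starRingEnd ℂ) ζ =
      -(1 * (D⁻¹ * (extremalDeriv ζ - extremalDeriv ξ) * (starRingEnd ℂ) ζ)) := by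
    rw [div_eq_mul_inv]; ring
  rw [e, Complex.neg_re]
  linarith

/-- Kaplan's criterion relative to `extremalDeriv`: close-to-convex functions are injective. -/
theorem injOn_of_re_deriv_div_pos {h : ℂ → ℂ} (hd : DifferentiableOn ℂ h (Metric.ball 0 1))
    (hpos : ∀ z ∈ Metric.ball (0 : ℂ) 1,
      0 < (deriv h z / (4 / 5 / (1 - z) * extremalDeriv z)).re) :
    Set.InjOn h (Metric.ball 0 1) := by
  intro z₁ hz₁ z₂ hz₂ heq
  by_contra hne
  set w₁ := extremalDeriv z₁ with hw₁
  set w₂ := extremalDeriv z₂ with hw₂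
  have hw : w₂ - w₁ ≠ 0 := fun h0 => hne <| by
    rw [← extremalDerivInv_extremalDeriv hz₁, ← extremalDerivInv_extremalDeriv hz₂, ← hw₁, ← hw₂,
      sub_eq_zero.1 h0]
  have hder : ∀ t ∈ Set.Icc (0 : ℝ) 1, ∃ z ∈ Metric.ball (0 : ℂ) 1,
      HasDerivAt (fun s : ℝ => (h (extremalDerivInv (w₁ + s * (w₂ - w₁))) / (w₂ - w₁)).re)
        (deriv h z / (4 / 5 / (1 - z) * extremalDeriv z)).re t := by
    intro t ht
    have hmem := convex_extremalDeriv_image (Set.mem_image_of_mem _ hz₁)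
      (Set.mem_image_of_mem _ hz₂) (sub_nonneg.2 ht.2) ht.1 (by ring)
    obtain ⟨z, hz, hzw⟩ := hmem
    refine ⟨z, hz, ?_⟩
    have e : w₁ + t * (w₂ - w₁) = extremalDeriv z := by
      rw [hzw]
      simp only [Complex.real_smul, Complex.ofReal_sub, Complex.ofReal_one, ← hw₁, ← hw₂]
      ring
    have hin : HasDerivAt (fun s : ℂ => w₁ + s * (w₂ - w₁)) (w₂ - w₁) (t : ℂ) := by
      simpa using ((hasDerivAt_id (t : ℂ)).mul_const (w₂ - w₁)).const_add w₁
    have hE : HasDerivAt (fun s : ℂ => extremalDerivInv (w₁ + s * (w₂ - w₁)))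
        ((4 / 5 / (1 - z) * extremalDeriv z)⁻¹ * (w₂ - w₁)) (t : ℂ) := by
      refine HasDerivAt.comp (h₂ := extremalDerivInv) (t : ℂ) ?_ hin
      rw [e]
      exact hasDerivAt_extremalDerivInv hz
    have hh : HasDerivAt (fun s : ℂ => h (extremalDerivInv (w₁ + s * (w₂ - w₁))) / (w₂ - w₁))
        (deriv h z * ((4 / 5 / (1 - z) * extremalDeriv z)⁻¹ * (w₂ - w₁)) / (w₂ - w₁)) (t : ℂ) := by
      refine (HasDerivAt.comp (t : ℂ) ?_ hE).div_const _
      rw [e, extremalDerivInv_extremalDeriv hz]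
      exact (hd.differentiableAt (Metric.isOpen_ball.mem_nhds hz)).hasDerivAt
    refine hh.real_of_complex.congr_deriv ?_
    congr 1
    rw [← mul_assoc, mul_div_cancel_right₀ _ hw, ← div_eq_mul_inv]
  choose! ζ hζ hζd using hder
  obtain ⟨c, hc, hc0⟩ := exists_hasDerivAt_eq_zero zero_lt_one
    (fun t ht => (hζd t ht).continuousAt.continuousWithinAt)
    (by
      simp only [Complex.ofReal_zero, zero_mul, add_zero, Complex.ofReal_one, one_mul,
        add_sub_cancel, hw₁, hw₂]
      rw [extremalDerivInv_extremalDeriv hz₁, extremalDerivInv_extremalDeriv hz₂, heq])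
    (fun t ht => hζd t (Set.Ioo_subset_Icc_self ht))
  exact (hpos _ (hζ c (Set.Ioo_subset_Icc_self hc))).ne' hc0

/-- The averaged function `h` with `h + z h' = extremalDeriv` is close-to-convex
relative to `extremalDeriv`. -/
theorem re_deriv_div_pos_of_add_mul_deriv {h : ℂ → ℂ}
    (hd : DifferentiableOn ℂ h (Metric.ball 0 1))
    (hode : ∀ z ∈ Metric.ball (0 : ℂ) 1, h z + z * deriv h z = extremalDeriv z)
    {z : ℂ} (hz : z ∈ Metric.ball (0 : ℂ) 1) :
    0 < (deriv h z / (4 / 5 / (1 - z) * extremalDeriv z)).re := by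
  have hd1 : DifferentiableOn ℂ (deriv h) (Metric.ball 0 1) := hd.deriv Metric.isOpen_ball
  set q : ℂ → ℂ := fun z => deriv h z / (4 / 5 / (1 - z) * extremalDeriv z) with hq
  have hqd : ∀ z ∈ Metric.ball (0 : ℂ) 1, ∃ q', HasDerivAt q q' z ∧
      z * q' = 1 - (2 + 9 / 5 * (z / (1 - z))) * q z := by
    intro z hz
    have hnhds := Metric.isOpen_ball.mem_nhds hz
    have hs := one_sub_mem_slitPlane hz
    have hne := Complex.slitPlane_ne_zero hs
    have hne' := extremalDeriv_ne_zero z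
    have d0 := (hd.differentiableAt hnhds).hasDerivAt
    have d1 := (hd1.differentiableAt hnhds).hasDerivAt
    have dF := hasDerivAt_extremalDeriv hs
    have dl : HasDerivAt (fun z => h z + z * deriv h z)
        (deriv h z + (1 * deriv h z + z * deriv (deriv h) z)) z :=
      d0.add ((hasDerivAt_id z).mul d1)
    have hode2 : deriv h z + (1 * deriv h z + z * deriv (deriv h) z) =
        4 / 5 / (1 - z) * extremalDeriv z := by
      refine dl.unique (dF.congr_of_eventuallyEq ?_)
      filter_upwards [hnhds] with x hx using hode x hx
    have dsub : HasDerivAt (fun z : ℂ => 1 - z) (-1) z := by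
      simpa using (hasDerivAt_id z).const_sub 1
    have dD := (((hasDerivAt_const z (4 / 5 : ℂ)).div dsub hne).mul dF)
    have hDne : 4 / 5 / (1 - z) * extremalDeriv z ≠ 0 :=
      mul_ne_zero (div_ne_zero (by norm_num) hne) hne'
    refine ⟨_, d1.div dD hDne, ?_⟩
    simp only [Pi.div_apply, hq]
    have h2 : z * deriv (deriv h) z = 4 / 5 / (1 - z) * extremalDeriv z - 2 * deriv h z := by
      linear_combination hode2
    rw [mul_div_assoc', mul_sub, ← mul_assoc z (deriv (deriv h) z), h2]
    field_simp
    ring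
  have hsub : Metric.closedBall (0 : ℂ) ‖z‖ ⊆ Metric.ball 0 1 :=
    Metric.closedBall_subset_ball (mem_ball_zero_iff.1 hz)
  have hcont : ContinuousOn (fun z => (q z).re) (Metric.closedBall 0 ‖z‖) := fun x hx => by
    obtain ⟨q', h1, -⟩ := hqd x (hsub hx)
    exact (Complex.continuous_re.continuousAt.comp h1.continuousAt).continuousWithinAt
  obtain ⟨z₀, hz₀, hmin⟩ := (isCompact_closedBall (0 : ℂ) ‖z‖).exists_isMinOn
    ⟨z, by simp⟩ hcont
  refine lt_of_lt_of_le ?_ (hmin (show z ∈ Metric.closedBall (0 : ℂ) ‖z‖ by simp))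
  obtain ⟨q', hq', heq⟩ := hqd z₀ (hsub hz₀)
  have hz₀n := mem_closedBall_zero_iff.1 hz₀
  have him := im_mul_deriv_eq_zero_of_circle_max hq'.neg fun x hx => by
    simp only [Pi.neg_apply, Complex.neg_re, neg_le_neg_iff]
    exact hmin (mem_closedBall_zero_iff.2 (hx.trans_le hz₀n))
  have hrad := le_re_mul_deriv_of_radial_bound (c := 0) hq'.neg fun t ht0 ht1 => by
    simp only [Pi.neg_apply, Complex.neg_re, mul_zero, sub_zero, neg_le_neg_iff]
    refine hmin (mem_closedBall_zero_iff.2 (le_trans ?_ hz₀n))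
    rw [norm_mul, Complex.norm_real, Real.norm_of_nonneg ht0.le]
    nlinarith [norm_nonneg z₀]
  rw [mul_neg, Complex.neg_im, neg_eq_zero] at him
  rw [mul_neg, Complex.neg_re] at hrad
  set A := 2 + 9 / 5 * (z₀ / (1 - z₀)) with hA
  have hs := one_sub_mem_slitPlane (hsub hz₀)
  have hne := Complex.slitPlane_ne_zero hs
  have hAre : 0 < A.re := by
    have e : A = ((11 / 10 : ℝ) : ℂ) + ((9 / 10 : ℝ) : ℂ) * ((1 + z₀) / (1 - z₀)) := by
      rw [hA]; push_cast; field_simp; ring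
    rw [e, Complex.add_re, Complex.ofReal_re, Complex.re_ofReal_mul, Complex.div_re, ← add_div]
    have hn : Complex.normSq z₀ < 1 := by
      rw [Complex.normSq_eq_norm_sq]
      have := mem_ball_zero_iff.1 (hsub hz₀)
      nlinarith [norm_nonneg z₀]
    have : 0 ≤ ((1 + z₀).re * (1 - z₀).re + (1 + z₀).im * (1 - z₀).im) := by
      simp only [Complex.normSq_apply, Complex.sub_re, Complex.sub_im, Complex.one_re,
        Complex.one_im, Complex.add_re, Complex.add_im] at hn ⊢
      nlinarith
    have := div_nonneg this (Complex.normSq_nonneg (1 - z₀))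
    linarith
  have hqA : A * q z₀ = ((1 - (z₀ * q').re : ℝ) : ℂ) := by
    have : z₀ * q' = (((z₀ * q').re : ℝ) : ℂ) := Complex.ext (by simp) (by rw [him]; simp)
    push_cast
    rw [← this, heq]
    ring
  have hA0 : A ≠ 0 := fun h0 => by simp [h0] at hAre
  have hq0 : q z₀ = ((1 - (z₀ * q').re : ℝ) : ℂ) * A⁻¹ := by
    rw [← hqA]; field_simp
  change 0 < (q z₀).re
  rw [hq0, Complex.re_ofReal_mul, Complex.inv_re]
  exact mul_pos (by linarith) (div_pos hAre (Complex.normSq_pos.2 hA0))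

/-- A nonempty compact set has a point of smallest norm. -/
theorem exists_min_norm_of_isCompact {K : Set ℂ} (hK : IsCompact K) {z : ℂ} (hz : z ∈ K) :
    ∃ z₀ ∈ K, ∀ w, ‖w‖ < ‖z₀‖ → w ∉ K := by
  obtain ⟨z₀, h1, h2⟩ := hK.exists_isMinOn ⟨z, hz⟩ continuous_norm.continuousOn
  exact ⟨z₀, h1, fun w hw hwK => (hw.trans_le (h2 hwK)).false⟩

/-- If `G` is nonvanishing with `Re (z G' / G) > -2/5` and `G 0 = 1`, then `G` is subordinate to
`extremalDeriv`. -/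
theorem exists_eq_extremalDeriv {G : ℂ → ℂ} (hG : DifferentiableOn ℂ G (Metric.ball 0 1))
    (hG0 : G 0 = 1) (hne : ∀ z ∈ Metric.ball (0 : ℂ) 1, G z ≠ 0)
    (hre : ∀ z ∈ Metric.ball (0 : ℂ) 1, -(2 / 5) < (z * deriv G z / G z).re)
    {z : ℂ} (hz : z ∈ Metric.ball (0 : ℂ) 1) :
    ∃ ξ : ℂ, ‖ξ‖ ≤ ‖z‖ ∧ G z = extremalDeriv ξ := by
  have hmem0 : (0 : ℂ) ∈ Metric.ball (0 : ℂ) 1 := Metric.mem_ball_self one_pos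
  have hquot : DifferentiableOn ℂ (fun z => deriv G z / G z) (Metric.ball 0 1) :=
    (hG.deriv Metric.isOpen_ball).div hG hne
  obtain ⟨L, hL0, hL⟩ := hquot.isExactOn_ball.with_val_at 0 0
  have hconst : ∀ u : ℂ → ℂ, (∀ z ∈ Metric.ball (0 : ℂ) 1, HasDerivAt u 0 z) →
      ∀ z ∈ Metric.ball (0 : ℂ) 1, u z = u 0 := fun u hu z hz =>
    (convex_ball (0 : ℂ) 1).is_const_of_fderivWithin_eq_zero (𝕜 := ℂ)
      (fun x hx => (hu x hx).differentiableAt.differentiableWithinAt)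
      (fun x hx => by
        rw [fderivWithin_of_isOpen Metric.isOpen_ball hx]
        ext
        simpa using (hu x hx).deriv) hz hmem0
  have hexp : ∀ z ∈ Metric.ball (0 : ℂ) 1, G z = Complex.exp (L z) := by
    intro z hz
    have hu := hconst (fun z => G z * Complex.exp (-L z)) (fun x hx => by
      have h1 := (hG.differentiableAt (Metric.isOpen_ball.mem_nhds hx)).hasDerivAt
      have h2 := (hL x hx).neg.cexp
      refine (h1.mul h2).congr_deriv ?_
      have := hne x hx
      simp only [Pi.neg_apply]
      field_simp
      ring) z hz
    simp only [hG0, hL0, neg_zero, Complex.exp_zero, mul_one] at hu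
    rw [Complex.exp_neg] at hu
    exact (mul_inv_eq_one₀ (Complex.exp_ne_zero _)).1 hu
  set φ : ℂ → ℂ := fun z => 1 - Complex.exp (-(5 / 4) * L z) with hφ
  have hφd : ∀ z ∈ Metric.ball (0 : ℂ) 1,
      HasDerivAt φ (5 / 4 * (deriv G z / G z) * (1 - φ z)) z := by
    intro z hz
    have := (((hL z hz).const_mul (-(5 / 4) : ℂ)).cexp).const_sub 1
    refine this.congr_deriv ?_
    simp only [hφ]
    ring
  have hφdo : DifferentiableOn ℂ φ (Metric.ball 0 1) := fun z hz =>
    (hφd z hz).differentiableAt.differentiableWithinAt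
  have hφ0 : φ 0 = 0 := by simp [hφ, hL0]
  have hlt : ∀ z ∈ Metric.ball (0 : ℂ) 1, ‖φ z‖ < 1 := by
    intro z hz
    by_contra! hbad
    have hsub : Metric.closedBall (0 : ℂ) ‖z‖ ⊆ Metric.ball 0 1 :=
      Metric.closedBall_subset_ball (mem_ball_zero_iff.1 hz)
    have hK : IsCompact (Metric.closedBall (0 : ℂ) ‖z‖ ∩ {w | 1 ≤ ‖φ w‖}) := by
      have hc : ContinuousOn (fun w => ‖φ w‖) (Metric.closedBall (0 : ℂ) ‖z‖) :=
        (hφdo.continuousOn.mono hsub).norm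
      exact (isCompact_closedBall _ _).of_isClosed_subset
        (hc.preimage_isClosed_of_isClosed Metric.isClosed_closedBall isClosed_Ici)
        Set.inter_subset_left
    obtain ⟨z₀, ⟨hz₀, hz₀bad⟩, hmin⟩ := exists_min_norm_of_isCompact hK
      (show z ∈ _ from ⟨by simp, hbad⟩)
    have hz₀b := hsub hz₀
    have hz₀0 : z₀ ≠ 0 := by
      rintro rfl
      simp only [Set.mem_ofPred_eq, hφ0, norm_zero] at hz₀bad
      linarith
    have hball : ∀ w ∈ Metric.ball (0 : ℂ) ‖z₀‖, ‖φ w‖ ≤ 1 := fun w hw => by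
      rw [mem_ball_zero_iff] at hw
      by_contra! hcon
      exact hmin w hw ⟨mem_closedBall_zero_iff.2 (hw.le.trans (mem_closedBall_zero_iff.1 hz₀)),
        hcon.le⟩
    have hcl : ∀ w, ‖w‖ ≤ ‖z₀‖ → ‖φ w‖ ≤ 1 := fun w hw => by
      have hw' : w ∈ closure (Metric.ball (0 : ℂ) ‖z₀‖) := by
        rw [closure_ball _ (norm_ne_zero_iff.2 hz₀0)]
        exact mem_closedBall_zero_iff.2 hw
      have hwb : w ∈ Metric.ball (0 : ℂ) 1 :=
        mem_ball_zero_iff.2 (hw.trans_lt (mem_ball_zero_iff.1 hz₀b))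
      have := (hφd w hwb).continuousAt.norm.continuousWithinAt (s := Metric.ball (0 : ℂ) ‖z₀‖)
      have hmem := this.mem_closure hw' (t := Set.Iic 1) fun x hx => hball x hx
      rwa [closure_Iic] at hmem
    have heq : ‖φ z₀‖ = 1 := le_antisymm (hcl z₀ le_rfl) hz₀bad
    obtain ⟨m, hm, hmeq⟩ := jack_lemma one_pos hz₀0 (hφd z₀ hz₀b)
      (hφdo.mono (Metric.ball_subset_ball (mem_ball_zero_iff.1 hz₀b).le)) hφ0 hcl heq
    have hne1 : 1 - φ z₀ ≠ 0 := by simp [hφ]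
    have hq : z₀ * deriv G z₀ / G z₀ = ((4 / 5 * m : ℝ) : ℂ) * (φ z₀ / (1 - φ z₀)) := by
      have : z₀ * deriv G z₀ / G z₀ * (1 - φ z₀) = 4 / 5 * (m * φ z₀) := by
        rw [← hmeq]; ring
      rw [mul_div_assoc', eq_div_iff hne1, this]
      push_cast
      ring
    have hhalf : (φ z₀ / (1 - φ z₀)).re = -(1 / 2) := by
      have hn : Complex.normSq (φ z₀) = 1 := by rw [Complex.normSq_eq_norm_sq, heq, one_pow]
      have hn2 := Complex.normSq_pos.2 hne1
      rw [Complex.div_re, ← add_div, div_eq_iff hn2.ne']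
      simp only [Complex.normSq_apply, Complex.sub_re, Complex.sub_im, Complex.one_re,
        Complex.one_im] at hn ⊢
      nlinarith
    have := hre z₀ hz₀b
    rw [hq, Complex.re_ofReal_mul, hhalf] at this
    linarith
  refine ⟨φ z, ?_, ?_⟩
  · exact Complex.norm_le_norm_of_mapsTo_ball hφdo
      (fun w hw => mem_closedBall_zero_iff.2 (hlt w hw).le) hφ0 (mem_ball_zero_iff.1 hz)
  · have hu := hconst (fun z => Complex.log (1 - φ z) + 5 / 4 * L z) (fun x hx => by
      have hs := one_sub_mem_slitPlane (mem_ball_zero_iff.2 (hlt x hx))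
      have := Complex.slitPlane_ne_zero hs
      refine ((((hφd x hx).const_sub 1).clog hs).add ((hL x hx).const_mul (5 / 4))).congr_deriv ?_
      field_simp
      ring) z hz
    simp only [hφ0, hL0, sub_zero, Complex.log_one, mul_zero, add_zero] at hu
    rw [hexp z hz, extremalDeriv]
    congr 1
    linear_combination (4 / 5 : ℂ) * hu

/-- **Hallenbeck–Ruscheweyh** for `extremalDeriv`: averaging preserves subordination. -/
theorem mem_image_of_add_mul_deriv {h p : ℂ → ℂ}
    (hd : DifferentiableOn ℂ h (Metric.ball 0 1))
    (hode : ∀ z ∈ Metric.ball (0 : ℂ) 1, h z + z * deriv h z = extremalDeriv z)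
    (hp : DifferentiableOn ℂ p (Metric.ball 0 1)) (hp0 : p 0 = h 0)
    (hsub : ∀ z ∈ Metric.ball (0 : ℂ) 1,
      ∃ ξ : ℂ, ‖ξ‖ ≤ ‖z‖ ∧ p z + z * deriv p z = extremalDeriv ξ)
    {z : ℂ} (hz : z ∈ Metric.ball (0 : ℂ) 1) : p z ∈ h '' Metric.ball 0 1 := by
  have hpos := fun z hz => re_deriv_div_pos_of_add_mul_deriv (z := z) hd hode hz
  have hinj := injOn_of_re_deriv_div_pos hd hpos
  have hne : ∀ z ∈ Metric.ball (0 : ℂ) 1, deriv h z ≠ 0 := fun z hz h0 => by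
    have := hpos z hz
    simp [h0] at this
  obtain ⟨r, hzr, hr1⟩ := exists_between (mem_ball_zero_iff.1 hz)
  have hr0 : 0 < r := (norm_nonneg z).trans_lt hzr
  have hrsub : Metric.ball (0 : ℂ) r ⊆ Metric.ball 0 1 := Metric.ball_subset_ball hr1.le
  have hrsub' : Metric.closedBall (0 : ℂ) r ⊆ Metric.ball 0 1 := Metric.closedBall_subset_ball hr1
  suffices p z ∈ h '' Metric.ball 0 r from Set.image_mono hrsub this
  by_contra hbad
  have hO : IsOpen (h '' Metric.ball 0 r) := by
    rw [isOpen_iff_mem_nhds]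
    rintro _ ⟨x, hx, rfl⟩
    rw [← ((hd.analyticAt (Metric.isOpen_ball.mem_nhds (hrsub hx))).hasStrictDerivAt).map_nhds_eq
      (hne x (hrsub hx))]
    exact Filter.image_mem_map (Metric.isOpen_ball.mem_nhds hx)
  have hKc : IsCompact (h '' Metric.closedBall 0 r) :=
    (isCompact_closedBall _ _).image_of_continuousOn (hd.continuousOn.mono hrsub')
  have hzsub : Metric.closedBall (0 : ℂ) ‖z‖ ⊆ Metric.ball 0 1 :=
    Metric.closedBall_subset_ball (mem_ball_zero_iff.1 hz)
  have hK : IsCompact (Metric.closedBall (0 : ℂ) ‖z‖ ∩ p ⁻¹' (h '' Metric.ball 0 r)ᶜ) :=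
    (isCompact_closedBall _ _).of_isClosed_subset
      ((hp.continuousOn.mono hzsub).preimage_isClosed_of_isClosed Metric.isClosed_closedBall
        hO.isClosed_compl) Set.inter_subset_left
  obtain ⟨z₀, ⟨hz₀, hz₀bad⟩, hmin⟩ := exists_min_norm_of_isCompact hK
    (show z ∈ _ from ⟨by simp, hbad⟩)
  have hz₀b := hzsub hz₀
  have hz₀r : ‖z₀‖ < r := (mem_closedBall_zero_iff.1 hz₀).trans_lt hzr
  have hz₀0 : z₀ ≠ 0 := by
    rintro rfl
    exact hz₀bad ⟨0, Metric.mem_ball_self hr0, hp0.symm⟩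
  have hball : ∀ w ∈ Metric.ball (0 : ℂ) ‖z₀‖, p w ∈ h '' Metric.ball 0 r := fun w hw => by
    rw [mem_ball_zero_iff] at hw
    by_contra hcon
    exact hmin w hw ⟨mem_closedBall_zero_iff.2 (hw.le.trans (mem_closedBall_zero_iff.1 hz₀)), hcon⟩
  have hcl : ∀ w, ‖w‖ ≤ ‖z₀‖ → p w ∈ h '' Metric.closedBall 0 r := fun w hw => by
    have hw' : w ∈ closure (Metric.ball (0 : ℂ) ‖z₀‖) := by
      rw [closure_ball _ (norm_ne_zero_iff.2 hz₀0)]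
      exact mem_closedBall_zero_iff.2 hw
    have hwb : w ∈ Metric.ball (0 : ℂ) 1 :=
      mem_ball_zero_iff.2 (hw.trans_lt (mem_ball_zero_iff.1 hz₀b))
    have := (hp.differentiableAt (Metric.isOpen_ball.mem_nhds hwb)).continuousAt.continuousWithinAt
      (s := Metric.ball (0 : ℂ) ‖z₀‖)
    have hmem := this.mem_closure hw' (t := h '' Metric.closedBall 0 r) fun x hx =>
      Set.image_mono Metric.ball_subset_closedBall (hball x hx)
    rwa [hKc.isClosed.closure_eq] at hmem
  set g := Function.invFunOn h (Metric.ball (0 : ℂ) 1) with hg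
  have hgh : ∀ x ∈ Metric.ball (0 : ℂ) 1, g (h x) = x := fun x hx => hinj.leftInvOn_invFunOn hx
  have hωd : ∀ w, ‖w‖ ≤ ‖z₀‖ → ∃ x ∈ Metric.closedBall (0 : ℂ) r, p w = h x ∧ g (p w) = x ∧
      HasDerivAt (fun w => g (p w)) ((deriv h x)⁻¹ * deriv p w) w := fun w hw => by
    obtain ⟨x, hx, hxw⟩ := hcl w hw
    have hwb : w ∈ Metric.ball (0 : ℂ) 1 :=
      mem_ball_zero_iff.2 (hw.trans_lt (mem_ball_zero_iff.1 hz₀b))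
    refine ⟨x, hx, hxw.symm, by rw [← hxw, hgh x (hrsub' hx)], ?_⟩
    refine HasDerivAt.comp (h₂ := g) w ?_
      (hp.differentiableAt (Metric.isOpen_ball.mem_nhds hwb)).hasDerivAt
    rw [← hxw]
    exact hasDerivAt_invFunOn Metric.isOpen_ball hd hinj (hrsub' hx) (hne x (hrsub' hx))
  obtain ⟨ζ, hζ, hpζ, hgζ, hdζ⟩ := hωd z₀ le_rfl
  have hζr : ‖ζ‖ = r := by
    refine le_antisymm (mem_closedBall_zero_iff.1 hζ) ?_
    by_contra! hcon
    exact hz₀bad ⟨ζ, mem_ball_zero_iff.2 hcon, hpζ.symm⟩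
  have hζ0 : ζ ≠ 0 := by rw [← norm_pos_iff, hζr]; exact hr0
  have hζb := hrsub' hζ
  obtain ⟨m, hm, hmeq⟩ := jack_lemma hr0 hz₀0 hdζ
    (fun w hw => by
      obtain ⟨x, -, -, -, hdx⟩ := hωd w (mem_ball_zero_iff.1 hw).le
      exact hdx.differentiableAt.differentiableWithinAt)
    (by simp only [hp0]; exact hgh 0 (Metric.mem_ball_self one_pos))
    (fun w hw => by
      obtain ⟨x, hx, -, hgx, -⟩ := hωd w hw
      simp only [hgx]
      exact mem_closedBall_zero_iff.1 hx)
    (by simp only [hgζ, hζr])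
  simp only [hgζ] at hmeq
  obtain ⟨ξ, hξ, hξeq⟩ := hsub z₀ hz₀b
  have hhne := hne ζ hζb
  have hzp : z₀ * deriv p z₀ = m * (ζ * deriv h ζ) := by
    have : z₀ * deriv p z₀ = z₀ * ((deriv h ζ)⁻¹ * deriv p z₀) * deriv h ζ := by field_simp
    rw [this, hmeq]
    ring
  have hdiff : extremalDeriv ξ - extremalDeriv ζ = ((m - 1 : ℝ) : ℂ) * (ζ * deriv h ζ) := by
    rw [← hξeq, ← hode ζ hζb, hpζ, hzp]
    push_cast
    ring
  have hsupp := re_extremalDeriv_sub_div_mul_conj_nonpos hζb hζ0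
    (hξ.trans (hz₀r.le.trans_eq hζr.symm))
  have hform : (extremalDeriv ξ - extremalDeriv ζ) / (4 / 5 / (1 - ζ) * extremalDeriv ζ) *
      (starRingEnd ℂ) ζ =
      (((m - 1) * r ^ 2 : ℝ) : ℂ) * (deriv h ζ / (4 / 5 / (1 - ζ) * extremalDeriv ζ)) := by
    have hzz : ζ * (starRingEnd ℂ) ζ = ((r ^ 2 : ℝ) : ℂ) := by
      rw [Complex.mul_conj, Complex.normSq_eq_norm_sq, hζr]
    rw [hdiff, Complex.ofReal_mul, ← hzz]
    ring
  rw [hform, Complex.re_ofReal_mul] at hsupp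
  have hm1 : m = 1 := by
    by_contra hmne
    have : 0 < m - 1 := sub_pos.2 (lt_of_le_of_ne hm (Ne.symm hmne))
    have := mul_pos (mul_pos this (pow_pos hr0 2)) (hpos ζ hζb)
    linarith
  rw [hm1, sub_self, Complex.ofReal_zero, zero_mul, sub_eq_zero] at hdiff
  have hξb : ξ ∈ Metric.ball (0 : ℂ) 1 :=
    mem_ball_zero_iff.2 (hξ.trans_lt (mem_ball_zero_iff.1 hz₀b))
  have : ξ = ζ := by
    rw [← extremalDerivInv_extremalDeriv hξb, hdiff, extremalDerivInv_extremalDeriv hζb]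
  rw [this, hζr] at hξ
  linarith

/-- A function vanishing at `0` with nonnegative derivative on `[0, ∞)` is nonnegative there. -/
theorem nonneg_of_hasDerivAt_nonneg {g g' : ℝ → ℝ} (hg : ∀ x, HasDerivAt g (g' x) x)
    (h0 : g 0 = 0) (hg' : ∀ x, 0 ≤ x → 0 ≤ g' x) {x : ℝ} (hx : 0 ≤ x) : 0 ≤ g x := by
  have hmono : MonotoneOn g (Set.Ici 0) := by
    refine monotoneOn_of_deriv_nonneg (convex_Ici 0)
      (fun y _ => (hg y).continuousAt.continuousWithinAt)
      (fun y _ => (hg y).differentiableAt.differentiableWithinAt) fun y hy => ?_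
    rw [interior_Ici] at hy
    rw [(hg y).deriv]
    exact hg' y (le_of_lt hy)
  have := hmono (Set.self_mem_Ici) hx hx
  rwa [h0] at this

/-- Taylor upper bound of degree four for the cosine. -/
theorem cos_le_taylor_four {x : ℝ} (hx : 0 ≤ x) :
    Real.cos x ≤ 1 - x ^ 2 / 2 + x ^ 4 / 24 := by
  have := nonneg_of_hasDerivAt_nonneg (g := fun y => 1 - y ^ 2 / 2 + y ^ 4 / 24 - Real.cos y)
    (g' := fun y => Real.sin y - (y - y ^ 3 / 6))
    (fun y => by
      have h := (((hasDerivAt_pow 2 y).div_const 2).const_sub 1).add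
        ((hasDerivAt_pow 4 y).div_const 24) |>.sub (Real.hasDerivAt_cos y)
      exact h.congr_deriv (by norm_num; ring))
    (by simp) (fun y hy => sub_nonneg.2 (Real.sin_ge_sub_cube hy)) hx
  linarith

/-- Taylor upper bound of degree five for the sine. -/
theorem sin_le_taylor_five {x : ℝ} (hx : 0 ≤ x) :
    Real.sin x ≤ x - x ^ 3 / 6 + x ^ 5 / 120 := by
  have := nonneg_of_hasDerivAt_nonneg (g := fun y => y - y ^ 3 / 6 + y ^ 5 / 120 - Real.sin y)
    (g' := fun y => 1 - y ^ 2 / 2 + y ^ 4 / 24 - Real.cos y)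
    (fun y => by
      have h := ((hasDerivAt_id y).sub ((hasDerivAt_pow 3 y).div_const 6)).add
        ((hasDerivAt_pow 5 y).div_const 120) |>.sub (Real.hasDerivAt_sin y)
      exact h.congr_deriv (by norm_num; ring))
    (by simp) (fun y hy => sub_nonneg.2 (cos_le_taylor_four hy)) hx
  linarith

/-- Taylor lower bound of degree six for the cosine. -/
theorem taylor_six_le_cos {x : ℝ} (hx : 0 ≤ x) :
    1 - x ^ 2 / 2 + x ^ 4 / 24 - x ^ 6 / 720 ≤ Real.cos x := by
  have := nonneg_of_hasDerivAt_nonneg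
    (g := fun y => Real.cos y - (1 - y ^ 2 / 2 + y ^ 4 / 24 - y ^ 6 / 720))
    (g' := fun y => y - y ^ 3 / 6 + y ^ 5 / 120 - Real.sin y)
    (fun y => by
      have h := (Real.hasDerivAt_cos y).sub ((((hasDerivAt_pow 2 y).div_const 2).const_sub 1).add
        ((hasDerivAt_pow 4 y).div_const 24) |>.sub ((hasDerivAt_pow 6 y).div_const 720))
      exact h.congr_deriv (by norm_num; ring))
    (by simp) (fun y hy => sub_nonneg.2 (sin_le_taylor_five hy)) hx
  linarith

/-- Taylor lower bound of degree seven for the sine. -/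
theorem taylor_seven_le_sin {x : ℝ} (hx : 0 ≤ x) :
    x - x ^ 3 / 6 + x ^ 5 / 120 - x ^ 7 / 5040 ≤ Real.sin x := by
  have := nonneg_of_hasDerivAt_nonneg
    (g := fun y => Real.sin y - (y - y ^ 3 / 6 + y ^ 5 / 120 - y ^ 7 / 5040))
    (g' := fun y => Real.cos y - (1 - y ^ 2 / 2 + y ^ 4 / 24 - y ^ 6 / 720))
    (fun y => by
      have h := (Real.hasDerivAt_sin y).sub (((hasDerivAt_id y).sub
        ((hasDerivAt_pow 3 y).div_const 6)).add
        ((hasDerivAt_pow 5 y).div_const 120) |>.sub ((hasDerivAt_pow 7 y).div_const 5040))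
      exact h.congr_deriv (by norm_num; ring))
    (by simp) (fun y hy => sub_nonneg.2 (taylor_six_le_cos hy)) hx
  linarith

/-- Decimal upper bounds for the sine and cosine of `π / 10`. -/
theorem sin_cos_pi_div_ten_le :
    Real.sin (Real.pi / 10) ≤ 0.309017 ∧ Real.cos (Real.pi / 10) ≤ 0.951057 := by
  have h5 : Real.cos (2 * (Real.pi / 10)) = (1 + √5) / 4 := by
    rw [← Real.cos_pi_div_five]
    congr 1
    ring
  have hc : Real.cos (Real.pi / 10) ^ 2 = (5 + √5) / 8 := by
    rw [Real.cos_two_mul] at h5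
    linarith
  have hs : Real.sin (Real.pi / 10) ^ 2 = (3 - √5) / 8 := by
    rw [Real.sin_sq, hc]
    ring
  have hl : 2.23606797 ≤ √5 := Real.le_sqrt_of_sq_le (by norm_num)
  have hu : √5 ≤ 2.2360680 := Real.sqrt_le_iff.2 (by norm_num)
  constructor
  · exact le_of_sq_le_sq (by rw [hs]; norm_num; linarith) (by norm_num)
  · exact le_of_sq_le_sq (by rw [hc]; norm_num; linarith) (by norm_num)

/-- The tangent line of the fifth root at `c ^ 5` lies above its graph. -/
theorem rpow_one_fifth_le {c x : ℝ} (hc : 0 < c) (hx : 0 ≤ x) :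
    x ^ (1 / 5 : ℝ) ≤ 4 / 5 * c + x / (5 * c ^ 4) := by
  set y := x ^ (1 / 5 : ℝ) with hy
  have hy0 : 0 ≤ y := Real.rpow_nonneg hx _
  have hxy : x = y ^ 5 := by
    rw [hy, ← Real.rpow_natCast, ← Real.rpow_mul hx]
    norm_num
  have hfac : 4 / 5 * c + x / (5 * c ^ 4) - y =
      (y - c) ^ 2 * (y ^ 3 + 2 * c * y ^ 2 + 3 * c ^ 2 * y + 4 * c ^ 3) / (5 * c ^ 4) := by
    rw [hxy]
    field_simp
    ring
  have : 0 ≤ 4 / 5 * c + x / (5 * c ^ 4) - y := by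
    rw [hfac]
    positivity
  linarith

/-- Polynomial form of the boundary estimate near `θ = 0`. -/
theorem boundary_poly_bound_near_zero {t : ℝ} (h0 : 0 ≤ t) (h1 : t ≤ 1.3) :
    ∃ c : ℝ, 0 < c ∧ (4 / 5 * c + t / (5 * c ^ 4)) *
      (0.309017 * (1 - (9 / 10 * t) ^ 2 / 2 + (9 / 10 * t) ^ 4 / 24) +
        0.951057 * (9 / 10 * t - (9 / 10 * t) ^ 3 / 6 + (9 / 10 * t) ^ 5 / 120)) ≤
      0.1486 + (t - t ^ 3 / 6) := by
  have bernstein : ∀ a b : ℝ, a ≤ t → t ≤ b → ∀ i j : ℕ, 0 ≤ (t - a) ^ i * (b - t) ^ j :=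
    fun a b ha hb i j =>
      mul_nonneg (pow_nonneg (sub_nonneg.2 ha) i) (pow_nonneg (sub_nonneg.2 hb) j)
  have cover : (0 ≤ t ∧ t ≤ 0.09) ∨ (0.09 ≤ t ∧ t ≤ 0.11) ∨ (0.11 ≤ t ∧ t ≤ 0.13) ∨
      (0.13 ≤ t ∧ t ≤ 0.21) ∨ (0.21 ≤ t ∧ t ≤ 0.625) ∨ (0.625 ≤ t ∧ t ≤ 1.3) := by
    grind
  rcases cover with h | h | h | h | h | h
  · refine ⟨0.6, by norm_num, ?_⟩
    rw [show 5 * ((0.6 : ℝ) ^ 4) = 81 / 125 by norm_num]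
    have B := bernstein _ _ h.1 h.2
    linarith [B 0 6, B 1 5, B 2 4, B 3 3, B 4 2, B 5 1, B 6 0]
  · refine ⟨0.635, by norm_num, ?_⟩
    rw [show 5 * ((0.635 : ℝ) ^ 4) = 260144641 / 320000000 by norm_num]
    have B := bernstein _ _ h.1 h.2
    linarith [B 0 6, B 1 5, B 2 4, B 3 3, B 4 2, B 5 1, B 6 0]
  · refine ⟨0.65, by norm_num, ?_⟩
    rw [show 5 * ((0.65 : ℝ) ^ 4) = 28561 / 32000 by norm_num]
    have B := bernstein _ _ h.1 h.2
    linarith [B 0 6, B 1 5, B 2 4, B 3 3, B 4 2, B 5 1, B 6 0]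
  · refine ⟨0.68, by norm_num, ?_⟩
    rw [show 5 * ((0.68 : ℝ) ^ 4) = 83521 / 78125 by norm_num]
    have B := bernstein _ _ h.1 h.2
    linarith [B 0 6, B 1 5, B 2 4, B 3 3, B 4 2, B 5 1, B 6 0]
  · refine ⟨0.79, by norm_num, ?_⟩
    rw [show 5 * ((0.79 : ℝ) ^ 4) = 38950081 / 20000000 by norm_num]
    have B := bernstein _ _ h.1 h.2
    linarith [B 0 6, B 1 5, B 2 4, B 3 3, B 4 2, B 5 1, B 6 0]
  · refine ⟨0.945, by norm_num, ?_⟩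
    rw [show 5 * ((0.945 : ℝ) ^ 4) = 1275989841 / 320000000 by norm_num]
    have B := bernstein _ _ h.1 h.2
    linarith [B 0 6, B 1 5, B 2 4, B 3 3, B 4 2, B 5 1, B 6 0]

/-- Polynomial form of the boundary estimate near `θ = π`, with `s = π - θ`. -/
theorem boundary_poly_bound_near_pi {s : ℝ} (h0 : 0 ≤ s) (h1 : s ≤ 2.3) :
    (4 / 5 + (3.1416 - s) / 5) *
      (9 / 10 * s - (9 / 10 * s) ^ 3 / 6 + (9 / 10 * s) ^ 5 / 120) ≤
      0.1486 + (s - s ^ 3 / 6 + s ^ 5 / 120 - s ^ 7 / 5040) := by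
  have B : ∀ i j : ℕ, 0 ≤ s ^ i * (2.3 - s) ^ j :=
    fun i j => mul_nonneg (pow_nonneg h0 i) (pow_nonneg (sub_nonneg.2 h1) j)
  linarith [B 0 7, B 1 6, B 2 5, B 3 4, B 4 3, B 5 2, B 6 1, B 7 0]

/-- The boundary estimate behind `Im (e^{-iθ} k(e^{iθ})) ≤ 0.743`. -/
theorem rpow_mul_sin_le {θ : ℝ} (h0 : 0 ≤ θ) (hpi : θ ≤ Real.pi) :
    (2 * Real.sin (θ / 2)) ^ (1 / 5 : ℝ) * Real.sin (Real.pi / 10 + 9 / 10 * θ) ≤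
      0.1486 + Real.sin θ := by
  have hx0 : 0 ≤ 2 * Real.sin (θ / 2) :=
    mul_nonneg zero_le_two (Real.sin_nonneg_of_nonneg_of_le_pi (by linarith) (by linarith))
  have hxθ : 2 * Real.sin (θ / 2) ≤ θ := by
    linarith [Real.sin_le (show 0 ≤ θ / 2 by linarith)]
  have hsin : 0 ≤ Real.sin (Real.pi / 10 + 9 / 10 * θ) :=
    Real.sin_nonneg_of_nonneg_of_le_pi (by linarith [Real.pi_pos]) (by linarith)
  have key : ∀ c : ℝ, 0 < c → (2 * Real.sin (θ / 2)) ^ (1 / 5 : ℝ) ≤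
      4 / 5 * c + θ / (5 * c ^ 4) := fun c hc =>
    (rpow_one_fifth_le hc hx0).trans (by gcongr)
  rcases le_total θ 1.3 with h | h
  · obtain ⟨c, hc, hpoly⟩ := boundary_poly_bound_near_zero h0 h
    have hu : 0 ≤ 9 / 10 * θ := by positivity
    have hsc := sin_cos_pi_div_ten_le
    have hle : Real.sin (Real.pi / 10 + 9 / 10 * θ) ≤
        0.309017 * (1 - (9 / 10 * θ) ^ 2 / 2 + (9 / 10 * θ) ^ 4 / 24) +
        0.951057 * (9 / 10 * θ - (9 / 10 * θ) ^ 3 / 6 + (9 / 10 * θ) ^ 5 / 120) := by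
      rw [Real.sin_add]
      have hcos : 0 ≤ Real.cos (9 / 10 * θ) :=
        Real.cos_nonneg_of_mem_Icc ⟨by linarith [Real.pi_pos], by linarith [Real.pi_gt_three]⟩
      have hs : 0 ≤ Real.sin (9 / 10 * θ) :=
        Real.sin_nonneg_of_nonneg_of_le_pi hu (by linarith)
      exact add_le_add
        (mul_le_mul hsc.1 (cos_le_taylor_four hu) hcos (by norm_num))
        (mul_le_mul hsc.2 (sin_le_taylor_five hu) hs (by norm_num))
    calc _ ≤ _ := mul_le_mul (key c hc) hle hsin (by positivity)
      _ ≤ _ := hpoly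
      _ ≤ _ := by linarith [Real.sin_ge_sub_cube h0]
  · have hs0 : 0 ≤ Real.pi - θ := by linarith
    have hle : Real.sin (Real.pi / 10 + 9 / 10 * θ) ≤ 9 / 10 * (Real.pi - θ) -
        (9 / 10 * (Real.pi - θ)) ^ 3 / 6 + (9 / 10 * (Real.pi - θ)) ^ 5 / 120 := by
      have : Real.pi / 10 + 9 / 10 * θ = Real.pi - 9 / 10 * (Real.pi - θ) := by ring
      rw [this, Real.sin_pi_sub]
      exact sin_le_taylor_five (by positivity)
    have hkey : (2 * Real.sin (θ / 2)) ^ (1 / 5 : ℝ) ≤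
        4 / 5 + (3.1416 - (Real.pi - θ)) / 5 := by
      have := key 1 one_pos
      norm_num at this ⊢
      linarith [Real.pi_lt_d4]
    have hlow := taylor_seven_le_sin hs0
    rw [Real.sin_pi_sub] at hlow
    calc _ ≤ _ := mul_le_mul hkey hle hsin (by linarith [Real.pi_lt_d4])
      _ ≤ _ := boundary_poly_bound_near_pi hs0 (by linarith [Real.pi_lt_d2])
      _ ≤ _ := by linarith

theorem kfun_three_fifths (z : ℂ) :
    kfun (3 / 5) z = 5 * (1 - (1 - z) ^ (1 / 5 : ℂ)) := by
  have he : ((2 * (3 / 5) - 1 : ℝ) : ℂ) = 1 / 5 := by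
    push_cast
    norm_num
  have hd : ((1 - 2 * (3 / 5) : ℝ) : ℂ) = -(1 / 5) := by
    push_cast
    norm_num
  rw [kfun, if_neg (by norm_num), he, hd]
  ring

theorem hasDerivAt_kfun {z : ℂ} (hz : 1 - z ∈ Complex.slitPlane) :
    HasDerivAt (kfun (3 / 5)) (extremalDeriv z) z := by
  have h := ((((hasDerivAt_id z).const_sub 1).cpow_const (c := 1 / 5) hz).const_sub 1).const_mul 5
  have hfun : kfun (3 / 5) = fun z => 5 * (1 - (1 - z) ^ (1 / 5 : ℂ)) :=
    funext kfun_three_fifths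
  rw [hfun]
  refine h.congr_deriv ?_
  simp only [id_eq]
  rw [extremalDeriv, Complex.cpow_def_of_ne_zero (Complex.slitPlane_ne_zero hz),
    show Complex.log (1 - z) * (1 / 5 - 1) = -(4 / 5) * Complex.log (1 - z) by ring]
  ring

theorem continuousOn_kfun : ContinuousOn (kfun (3 / 5)) (Metric.closedBall 0 1) := by
  have hfun : kfun (3 / 5) = fun z => 5 * (1 - (1 - z) ^ (1 / 5 : ℂ)) :=
    funext kfun_three_fifths
  rw [hfun]
  intro z hz
  have hre : 0 ≤ (1 - z).re := by
    have := (Complex.re_le_norm z).trans (mem_closedBall_zero_iff.1 hz)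
    simpa using this
  have h1 : ContinuousAt (fun w : ℂ => w ^ (1 / 5 : ℂ)) (1 - z) :=
    Complex.continuousAt_cpow_const_of_re_pos (Or.inl hre) (by norm_num)
  have h2 : ContinuousAt (fun w : ℂ => (1 - w) ^ (1 / 5 : ℂ)) z :=
    ContinuousAt.comp (f := fun w : ℂ => 1 - w) h1 (by fun_prop)
  exact (continuousAt_const.mul (continuousAt_const.sub h2)).continuousWithinAt

theorem kfun_zero : kfun (3 / 5) 0 = 0 := by
  simp [kfun_three_fifths]

/-- The exact boundary values of the imaginary part of `k(z) / z`. -/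
theorem im_exp_mul_kfun {θ : ℝ} (h0 : 0 < θ) (hpi : θ < Real.pi) :
    (Complex.exp (-(θ : ℂ) * Complex.I) *
      kfun (3 / 5) (Complex.exp ((θ : ℂ) * Complex.I))).im =
    5 * ((2 * Real.sin (θ / 2)) ^ (1 / 5 : ℝ) * Real.sin (Real.pi / 10 + 9 / 10 * θ) -
      Real.sin θ) := by
  set r := 2 * Real.sin (θ / 2) with hr
  have hr0 : 0 < r :=
    mul_pos two_pos (Real.sin_pos_of_pos_of_lt_pi (by linarith) (by linarith))
  have hfac : 1 - Complex.exp ((θ : ℂ) * Complex.I) =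
      (r : ℂ) * Complex.exp ((((θ - Real.pi) / 2 : ℝ) : ℂ) * Complex.I) := by
    have hc : Real.cos θ = 1 - 2 * Real.sin (θ / 2) ^ 2 := by
      have := Real.cos_two_mul (θ / 2)
      have h2 := Real.sin_sq_add_cos_sq (θ / 2)
      rw [show 2 * (θ / 2) = θ by ring] at this
      linarith
    have hs : Real.sin θ = 2 * Real.sin (θ / 2) * Real.cos (θ / 2) := by
      have := Real.sin_two_mul (θ / 2)
      rwa [show 2 * (θ / 2) = θ by ring] at this
    have ha : (θ - Real.pi) / 2 = θ / 2 - Real.pi / 2 := by ring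
    apply Complex.ext
    · rw [Complex.re_ofReal_mul, Complex.exp_ofReal_mul_I_re, ha, Real.cos_sub_pi_div_two,
        Complex.sub_re, Complex.exp_ofReal_mul_I_re, hc, hr, Complex.one_re]
      ring
    · rw [Complex.im_ofReal_mul, Complex.exp_ofReal_mul_I_im, ha, Real.sin_sub_pi_div_two,
        Complex.sub_im, Complex.exp_ofReal_mul_I_im, hs, hr, Complex.one_im]
      ring
  have hlog : Complex.log (1 - Complex.exp ((θ : ℂ) * Complex.I)) =
      (Real.log r : ℂ) + (((θ - Real.pi) / 2 : ℝ) : ℂ) * Complex.I := by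
    rw [hfac, Complex.log_ofReal_mul hr0 (Complex.exp_ne_zero _), Complex.log_exp]
    · simp
      linarith [Real.pi_pos]
    · simp
      linarith [Real.pi_pos]
  have hpow : Complex.exp (-(θ : ℂ) * Complex.I) *
      (1 - Complex.exp ((θ : ℂ) * Complex.I)) ^ (1 / 5 : ℂ) =
      ((r ^ (1 / 5 : ℝ) : ℝ) : ℂ) *
        Complex.exp (((-(Real.pi / 10 + 9 / 10 * θ) : ℝ) : ℂ) * Complex.I) := by
    rw [Complex.cpow_def_of_ne_zero (by
      rw [hfac]
      exact mul_ne_zero (Complex.ofReal_ne_zero.2 hr0.ne') (Complex.exp_ne_zero _)), hlog,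
      Real.rpow_def_of_pos hr0, Complex.ofReal_exp, ← Complex.exp_add, ← Complex.exp_add]
    congr 1
    push_cast
    ring
  have hexp : Complex.exp (-(θ : ℂ) * Complex.I) = Complex.exp (((-θ : ℝ) : ℂ) * Complex.I) := by
    push_cast
    rfl
  rw [kfun_three_fifths, show ∀ a b : ℂ, a * (5 * (1 - b)) = ((5 : ℝ) : ℂ) * (a - a * b) by
    intro a b
    push_cast
    ring, hpow, Complex.im_ofReal_mul, Complex.sub_im, Complex.im_ofReal_mul, hexp,
    Complex.exp_ofReal_mul_I_im, Complex.exp_ofReal_mul_I_im, Real.sin_neg, Real.sin_neg]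
  ring

theorem im_exp_mul_kfun_le {θ : ℝ} (h0 : 0 < θ) (hpi : θ < Real.pi) :
    (Complex.exp (-(θ : ℂ) * Complex.I) *
      kfun (3 / 5) (Complex.exp ((θ : ℂ) * Complex.I))).im ≤ 0.743 := by
  rw [im_exp_mul_kfun h0 hpi]
  linarith [rpow_mul_sin_le h0.le hpi.le]

theorem im_extremalDeriv_nonneg {w : ℂ} (him : 0 ≤ w.im) (hre : w.re < 1) :
    0 ≤ (extremalDeriv w).im := by
  have harg : Complex.arg (1 - w) ≤ 0 := by
    rcases him.eq_or_lt with h | h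
    · have : 1 - w = ((1 - w.re : ℝ) : ℂ) := by
        apply Complex.ext <;> simp [← h]
      rw [this, Complex.arg_ofReal_of_nonneg (by linarith)]
    · exact (Complex.arg_neg_iff.2 (by simpa using h)).le
  have hgt := Complex.neg_pi_lt_arg (1 - w)
  have himlog : (-(4 / 5) * Complex.log (1 - w)).im = -(4 / 5) * Complex.arg (1 - w) := by
    rw [show (-(4 / 5) : ℂ) = ((-(4 / 5) : ℝ) : ℂ) by push_cast; rfl, Complex.im_ofReal_mul,
      Complex.log_im]
  rw [extremalDeriv, Complex.exp_im, himlog]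
  exact mul_nonneg (Real.exp_pos _).le
    (Real.sin_nonneg_of_nonneg_of_le_pi (by linarith) (by linarith))

theorem im_kfun_div_nonneg {z : ℂ} (him : 0 < z.im) (hz : ‖z‖ = 1) :
    0 ≤ (kfun (3 / 5) z / z).im := by
  have hz0 : z ≠ 0 := by
    rintro rfl
    simp at him
  have hre : z.re < 1 := by
    have h1 := Complex.sq_norm z
    rw [hz, Complex.normSq_apply] at h1
    nlinarith
  have hret : ∀ t ∈ Set.Icc (0 : ℝ) 1, t * z.re < 1 := fun t ht => by
    rcases ht.1.eq_or_lt with h | h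
    · simp [← h]
    · nlinarith [ht.2]
  have hder : ∀ t ∈ Set.Icc (0 : ℝ) 1, HasDerivAt
      (fun s : ℝ => (kfun (3 / 5) (s * z) / z).im) (extremalDeriv (t * z)).im t := by
    intro t ht
    have hslit : 1 - (t : ℂ) * z ∈ Complex.slitPlane := by
      left
      simpa using hret t ht
    have h1 : HasDerivAt (fun s : ℂ => kfun (3 / 5) (s * z) / z)
        (extremalDeriv (t * z)) (t : ℂ) := by
      have he : HasDerivAt (fun s : ℂ => s * z) z (t : ℂ) := by
        simpa using (hasDerivAt_id (t : ℂ)).mul_const z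
      have := (HasDerivAt.comp (t : ℂ) (hasDerivAt_kfun hslit) he).div_const z
      rw [mul_div_cancel_right₀ _ hz0] at this
      exact this
    have h2 := (h1.const_mul (-Complex.I)).real_of_complex
    simpa using h2
  have hmono : MonotoneOn (fun s : ℝ => (kfun (3 / 5) (s * z) / z).im) (Set.Icc 0 1) := by
    refine monotoneOn_of_deriv_nonneg (convex_Icc 0 1)
      (fun t ht => (hder t ht).continuousAt.continuousWithinAt)
      (fun t ht => (hder t (interior_subset ht)).differentiableAt.differentiableWithinAt)
      fun t ht => ?_
    have ht' := interior_subset ht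
    rw [(hder t ht').deriv]
    refine im_extremalDeriv_nonneg ?_ ?_
    · rw [Complex.im_ofReal_mul]
      exact mul_nonneg ht'.1 him.le
    · rw [Complex.re_ofReal_mul]
      exact hret t ht'
  have := hmono (Set.left_mem_Icc.2 zero_le_one) (Set.right_mem_Icc.2 zero_le_one) zero_le_one
  simpa [kfun_zero] using this

theorem kfun_conj {z : ℂ} (hz : z.re ≤ 1) :
    kfun (3 / 5) (starRingEnd ℂ z) = starRingEnd ℂ (kfun (3 / 5) z) := by
  have harg : Complex.arg (1 - z) ≠ Real.pi := fun h => by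
    have := (Complex.arg_eq_pi_iff.1 h).1
    simp at this
    linarith
  have hc := Complex.conj_cpow (1 - z) (1 / 5) harg
  simp only [map_sub, map_one, map_div₀, map_ofNat] at hc
  simp only [kfun_three_fifths, map_mul, map_sub, map_one, map_ofNat, hc]

theorem abs_im_kfun_div_le {z : ℂ} (hz : ‖z‖ = 1) : |(kfun (3 / 5) z / z).im| ≤ 0.743 := by
  have hre : z.re ≤ 1 := hz ▸ Complex.re_le_norm z
  have upper : ∀ {w : ℂ}, ‖w‖ = 1 → 0 < w.im → |(kfun (3 / 5) w / w).im| ≤ 0.743 := by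
    intro w hw him
    rw [abs_of_nonneg (im_kfun_div_nonneg him hw)]
    have h0 : 0 < Complex.arg w :=
      lt_of_le_of_ne (Complex.arg_nonneg_iff.2 him.le) fun h => by
        have := (Complex.arg_eq_zero_iff.1 h.symm).2
        linarith
    have hpi : Complex.arg w < Real.pi :=
      lt_of_le_of_ne (Complex.arg_le_pi w) fun h => by
        have := (Complex.arg_eq_pi_iff.1 h).2
        linarith
    have hexp : Complex.exp ((Complex.arg w : ℂ) * Complex.I) = w := by
      have := Complex.norm_mul_exp_arg_mul_I w
      simpa [hw] using this
    have := im_exp_mul_kfun_le h0 hpi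
    rw [neg_mul, Complex.exp_neg, hexp, inv_mul_eq_div] at this
    exact this
  have hconj : kfun (3 / 5) (starRingEnd ℂ z) / starRingEnd ℂ z =
      starRingEnd ℂ (kfun (3 / 5) z / z) := by
    rw [kfun_conj hre, map_div₀]
  rcases lt_trichotomy z.im 0 with him | him | him
  · have := upper (w := starRingEnd ℂ z) (by simpa using hz) (by simpa using him)
    rwa [hconj, Complex.conj_im, abs_neg] at this
  · rw [Complex.conj_eq_iff_im.2 him] at hconj
    rw [Complex.conj_eq_iff_im.1 hconj.symm]
    norm_num
  · exact upper hz him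

theorem differentiableOn_kfun : DifferentiableOn ℂ (kfun (3 / 5)) (Metric.ball 0 1) :=
  fun _ hz => (hasDerivAt_kfun (one_sub_mem_slitPlane hz)).differentiableAt.differentiableWithinAt

/-- If `Im h` is at most `M` on the unit circle then it is at most `M` on the disk. -/
theorem im_le_of_im_le_on_circle {h : ℂ → ℂ} (hd : DiffContOnCl ℂ h (Metric.ball 0 1)) {M : ℝ}
    (hM : ∀ z, ‖z‖ = 1 → (h z).im ≤ M) {z : ℂ} (hz : z ∈ Metric.ball (0 : ℂ) 1) :
    (h z).im ≤ M := by
  have hnorm : ∀ w, ‖Complex.exp (-Complex.I * h w)‖ = Real.exp (h w).im := fun w => by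
    rw [Complex.norm_exp]
    simp
  have hdc : DiffContOnCl ℂ (fun w => Complex.exp (-Complex.I * h w)) (Metric.ball 0 1) :=
    ⟨(hd.1.const_mul _).cexp, (continuousOn_const.mul hd.2).cexp⟩
  have := Complex.norm_le_of_forall_mem_frontier_norm_le Metric.isBounded_ball hdc
    (C := Real.exp M) (fun w hw => by
      rw [frontier_ball (0 : ℂ) one_ne_zero, mem_sphere_zero_iff_norm] at hw
      rw [hnorm]
      exact Real.exp_le_exp.2 (hM w hw)) (subset_closure hz)
  rw [hnorm] at this
  exact Real.exp_le_exp.1 this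

theorem abs_im_dslope_kfun_le {z : ℂ} (hz : z ∈ Metric.ball (0 : ℂ) 1) :
    |(dslope (kfun (3 / 5)) 0 z).im| ≤ 0.743 := by
  have hd : DiffContOnCl ℂ (dslope (kfun (3 / 5)) 0) (Metric.ball 0 1) := by
    refine ⟨(Complex.differentiableOn_dslope (Metric.ball_mem_nhds 0 one_pos)).2
      differentiableOn_kfun, ?_⟩
    rw [closure_ball (0 : ℂ) one_ne_zero]
    exact (continuousOn_dslope (Metric.closedBall_mem_nhds 0 one_pos)).2
      ⟨continuousOn_kfun, (hasDerivAt_kfun (by simp)).differentiableAt⟩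
  have hcirc : ∀ w : ℂ, ‖w‖ = 1 → |(dslope (kfun (3 / 5)) 0 w).im| ≤ 0.743 := fun w hw => by
    have hw0 : w ≠ 0 := norm_ne_zero_iff.1 (by rw [hw]; exact one_ne_zero)
    rw [dslope_of_ne _ hw0, slope_def_field, kfun_zero, sub_zero, sub_zero]
    exact abs_im_kfun_div_le hw
  refine abs_le.2 ⟨?_, ?_⟩
  · have := im_le_of_im_le_on_circle hd.neg (M := 0.743)
      (fun w hw => by
        have := (abs_le.1 (hcirc w hw)).1
        simp only [Pi.neg_apply, Complex.neg_im]
        linarith) hz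
    simp only [Pi.neg_apply, Complex.neg_im] at this
    linarith
  · exact im_le_of_im_le_on_circle hd (fun w hw => (abs_le.1 (hcirc w hw)).2) hz

theorem bound_lt_five_mul_two_rpow : (0.743 : ℝ) < 5 * (2 ^ ((1 : ℝ) / 5) - 1) := by
  have : (1.1486 : ℝ) < 2 ^ ((1 : ℝ) / 5) := by
    have hpow : ((1.1486 : ℝ) ^ 5) ^ ((1 : ℝ) / 5) = 1.1486 := by
      rw [← Real.rpow_natCast, ← Real.rpow_mul (by norm_num)]
      norm_num
    rw [← hpow]
    exact Real.rpow_lt_rpow (by norm_num) (by norm_num) (by norm_num)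
  linarith

theorem dslope_mem_image_of_isConvexOfOrder {f : ℂ → ℂ} (hf : IsConvexOfOrder (3 / 5) f) {z : ℂ}
    (hz : z ∈ Metric.ball (0 : ℂ) 1) :
    dslope f 0 z ∈ dslope (kfun (3 / 5)) 0 '' Metric.ball 0 1 := by
  obtain ⟨hfd, hf0, hf1, hfz⟩ := hf
  rw [unitDisk] at hfd hfz
  have hnhds := Metric.ball_mem_nhds (0 : ℂ) one_pos
  have hk0 := hasDerivAt_kfun (z := 0) (by simp)
  refine mem_image_of_add_mul_deriv
    ((Complex.differentiableOn_dslope hnhds).2 differentiableOn_kfun)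
    (fun w hw => ?_) ((Complex.differentiableOn_dslope hnhds).2 hfd) ?_ (fun w hw => ?_) hz
  · rw [dslope_zero_add_mul_deriv differentiableOn_kfun kfun_zero hw]
    exact (hasDerivAt_kfun (one_sub_mem_slitPlane hw)).deriv
  · rw [dslope_same, dslope_same, hf1, hk0.deriv]
    simp [extremalDeriv]
  · rw [dslope_zero_add_mul_deriv hfd hf0 hw]
    refine exists_eq_extremalDeriv (hfd.deriv Metric.isOpen_ball) hf1
      (fun u hu => (hfz u hu).1) (fun u hu => ?_) hw
    have := (hfz u hu).2
    rw [Complex.add_re, Complex.one_re] at this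
    linarith

/-- for `f ∈ K(3/5)`, `|Im(f(z)/z)| < 5(2^{1/5} - 1)` on `𝔻 \ {0}`; indeed
`M(3/5) = sup_{0<θ<π} Im(e^{-iθ} k_{3/5}(e^{iθ})) < 5(2^{1/5} - 1) = -k_{3/5}(-1)`. -/
theorem im_bound_threeFifths (f : ℂ → ℂ) (hf : IsConvexOfOrder (3 / 5) f) :
    (∀ z ∈ unitDisk, z ≠ 0 →
      |(f z / z).im| < 5 * (2 ^ ((1 : ℝ) / 5) - 1)) ∧
    sSup {y : ℝ | ∃ θ ∈ Set.Ioo (0 : ℝ) Real.pi,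
        y = (Complex.exp (-(θ : ℂ) * Complex.I) *
          kfun (3 / 5) (Complex.exp ((θ : ℂ) * Complex.I))).im}
      < 5 * (2 ^ ((1 : ℝ) / 5) - 1) ∧
    -kfun (3 / 5) (-1) = (((5 * (2 ^ ((1 : ℝ) / 5) - 1) : ℝ)) : ℂ) := by
  refine ⟨fun z hz hz0 => ?_, ?_, ?_⟩
  · obtain ⟨w, hw, hwz⟩ := dslope_mem_image_of_isConvexOfOrder hf hz
    have hslope : f z / z = dslope f 0 z := by
      rw [dslope_of_ne _ hz0, slope_def_field, hf.2.1, sub_zero, sub_zero]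
    rw [hslope, ← hwz]
    exact (abs_im_dslope_kfun_le hw).trans_lt bound_lt_five_mul_two_rpow
  · refine lt_of_le_of_lt (csSup_le ?_ ?_) bound_lt_five_mul_two_rpow
    · exact ⟨_, 1, ⟨one_pos, by linarith [Real.pi_gt_three]⟩, rfl⟩
    · rintro y ⟨θ, hθ, rfl⟩
      exact im_exp_mul_kfun_le hθ.1 hθ.2
  · rw [kfun_three_fifths, show (1 - -1 : ℂ) = ((2 : ℝ) : ℂ) by push_cast; ring,
      show (1 / 5 : ℂ) = (((1 : ℝ) / 5 : ℝ) : ℂ) by push_cast; rfl,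
      ← Complex.ofReal_cpow zero_le_two]
    push_cast
    ring
end
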